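/- arXiv:2201.08632 — 2 statements merged into one kernel-verified Lean document; each statement's English description precedes it below -/
import Mathlib

section
/- Let q be a prime power and let ν, m₁, m₂, t be positive integers with m₁ > m₂ ≥ t+1 and 2ν ≥ 2m₁ + m₂ + 2. Then c₁(ν,m₁,m₂,t) > c₁(ν,m₂,m₁,t) and c₂(ν,m₁,m₂,t) > c₂(ν,m₂,m₁,t). -/
open Finset Module

noncomputable section

/-- Gaussian binomial coefficient `[n choose k]_q` as a rational number. -/
def gaussBinom (q n k : ℕ) : ℚ :=
  ∏ i ∈ Finset.range k, ((q : ℚ) ^ ((n : ℤ) - i) - 1) / ((q : ℚ) ^ ((k : ℤ) - i) - 1)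

/-- `N'(a; m; 2ν)`, the number of `m`-dim totally isotropic subspaces containing
a fixed `a`-dim one. -/
def Nprime (q a m ν : ℕ) : ℚ :=
  ∏ i ∈ Finset.Icc 1 (m - a), ((q : ℚ) ^ (2 * ((ν : ℤ) - m + i)) - 1) / ((q : ℚ) ^ (i : ℤ) - 1)

variable {K V : Type*} [Field K] [AddCommGroup V] [Module K V]

/-- A subspace is totally isotropic w.r.t. the bilinear form `f`. -/
def TotallyIsotropic (f : V →ₗ[K] V →ₗ[K] K) (W : Submodule K V) : Prop :=
  ∀ x ∈ W, ∀ y ∈ W, f x y = 0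

/-- `polar f m` = `𝒫_m`, the set of `m`-dimensional totally isotropic subspaces. -/
def polar (f : V →ₗ[K] V →ₗ[K] K) (m : ℕ) : Set (Submodule K V) :=
  {W | TotallyIsotropic f W ∧ finrank K W = m}

/-- `X` is a `t`-cover of the family `ℱ`. -/
def IsTCover (f : V →ₗ[K] V →ₗ[K] K) (t : ℕ) (ℱ : Set (Submodule K V))
    (X : Submodule K V) : Prop :=
  TotallyIsotropic f X ∧ ∀ F ∈ ℱ, t ≤ finrank K ↥(X ⊓ F)

/-- `τ_t(ℱ)`, the minimum dimension of a `t`-cover of `ℱ`. -/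
def tauCover (f : V →ₗ[K] V →ₗ[K] K) (t : ℕ) (ℱ : Set (Submodule K V)) : ℕ :=
  sInf {x | ∃ X, IsTCover f t ℱ X ∧ finrank K ↥X = x}

def C1 (f : V →ₗ[K] V →ₗ[K] K) (M T : Submodule K V) (m t : ℕ) : Set (Submodule K V) :=
  {F | F ∈ polar f m ∧ T ≤ F ∧ t + 1 ≤ finrank K ↥(F ⊓ M)}

def C2 (f : V →ₗ[K] V →ₗ[K] K) (M T : Submodule K V) (m : ℕ) : Set (Submodule K V) :=
  {F | F ∈ polar f m ∧ T ≤ F} ∪ {F | F ∈ polar f m ∧ F ≤ M}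

def C3 (f : V →ₗ[K] V →ₗ[K] K) (S : Submodule K V) (m : ℕ) : Set (Submodule K V) :=
  {F | F ∈ polar f m ∧ S ≤ F}

def C4 (f : V →ₗ[K] V →ₗ[K] K) (S : Submodule K V) (m t : ℕ) : Set (Submodule K V) :=
  {F | F ∈ polar f m ∧ t ≤ finrank K ↥(F ⊓ S)}

def s0 (q ν m s t : ℕ) : ℚ :=
  gaussBinom q (s - t) 1 * Nprime q (t + 1) m ν - q * gaussBinom q (s - t) 2 * Nprime q (t + 2) m ν


section helpers

def fs {α : Type*} [Finite α] (s : Set α) : Finset α := s.toFinite.toFinset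

theorem mem_fs {α : Type*} [Finite α] (s : Set α) (x : α) : x ∈ fs s ↔ x ∈ s := by
  simp [fs]

theorem card_fs {α : Type*} [Finite α] (s : Set α) : (fs s).card = s.ncard := by
  rw [fs, Set.ncard_eq_toFinset_card s s.toFinite]

/-- subspaces between `W` and `U` of dimension one more than `W`. -/
def Lset (W U : Submodule K V) : Set (Submodule K V) :=
  {S | W ≤ S ∧ S ≤ U ∧ finrank K S = finrank K W + 1}

def br (q : ℚ) (k : ℕ) : ℚ := (q ^ k - 1) / (q - 1)

def NN (q : ℚ) : ℕ → ℕ → ℚ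
  | _, 0 => 1
  | d, k + 1 => (q ^ (2 * d) - 1) / (q ^ (k + 1) - 1) * NN q (d - 1) k

theorem ncard_sub [Fintype K] [Finite V] (U : Submodule K V) :
    (U : Set V).ncard = Fintype.card K ^ finrank K U := by
  have : Module.Finite K V := Module.Finite.of_finite
  rw [← Nat.card_eq_fintype_card, ← Module.natCard_eq_pow_finrank (K := K) (V := U)]
  rfl

theorem Lset_mul [Fintype K] [Finite V] [Finite (Submodule K V)] {W U : Submodule K V} (h : W ≤ U) :
    (fs (Lset W U)).card * (Fintype.card K ^ (finrank K W + 1) - Fintype.card K ^ finrank K W) =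
      Fintype.card K ^ finrank K U - Fintype.card K ^ finrank K W := by
  classical
  have : Module.Finite K V := Module.Finite.of_finite
  have key : ∀ S : Submodule K V, W ≤ S → (fs ((S : Set V) \ W)).card =
      Fintype.card K ^ finrank K S - Fintype.card K ^ finrank K W := by
    intro S hS
    rw [card_fs, Set.ncard_sdiff (by exact_mod_cast hS) (Set.toFinite _), ncard_sub, ncard_sub]
  rw [← key U h]
  have := Finset.card_eq_sum_card_fiberwise (f := fun v => W ⊔ Submodule.span K {v})
    (s := fs ((U : Set V) \ W)) (t := fs (Lset W U)) (by
      intro v hv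
      have hv := (mem_fs _ _).1 hv
      refine (mem_fs _ _).2 ⟨le_sup_left, sup_le h ?_, ?_⟩
      · rw [Submodule.span_singleton_le_iff_mem]; exact hv.1
      · exact Submodule.finrank_sup_span_singleton hv.2)
  rw [this, Finset.card_eq_sum_ones, Finset.sum_mul]
  refine Finset.sum_congr rfl fun S hS => ?_
  obtain ⟨h1, h2, h3⟩ := (mem_fs _ _).1 hS
  rw [one_mul, ← h3, ← key S h1]
  congr 1
  ext v
  simp only [mem_fs, Finset.mem_filter, Set.mem_sdiff, SetLike.mem_coe]
  constructor
  · rintro ⟨hv1, hv2⟩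
    refine ⟨⟨h2 hv1, hv2⟩, ?_⟩
    apply Submodule.eq_of_le_of_finrank_eq
    · exact sup_le h1 (by rwa [Submodule.span_singleton_le_iff_mem])
    · rw [Submodule.finrank_sup_span_singleton hv2, h3]
  · rintro ⟨⟨hv1, hv2⟩, rfl⟩
    exact ⟨Submodule.mem_sup_right (Submodule.mem_span_singleton_self v), hv2⟩

theorem Lset_card [Fintype K] [Finite V] [Finite (Submodule K V)] {q : ℕ}
    (hq : Fintype.card K = q) {W U : Submodule K V} (h : W ≤ U) :
    ((fs (Lset W U)).card : ℚ) = br q (finrank K U - finrank K W) := by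
  have : Module.Finite K V := Module.Finite.of_finite
  have h1 := Lset_mul h
  have hq1 : 1 < q := hq ▸ Fintype.one_lt_card
  have hle : finrank K W ≤ finrank K U := Submodule.finrank_mono h
  rw [hq] at h1
  zify [Nat.pow_le_pow_right hq1.le hle,
    Nat.pow_le_pow_right hq1.le (Nat.le_succ (finrank K W))] at h1
  obtain ⟨d, hd⟩ := Nat.exists_eq_add_of_le hle
  rw [hd, Nat.add_sub_cancel_left, br]
  have hq' : (1 : ℚ) < q := by exact_mod_cast hq1
  rw [eq_div_iff (by linarith)]
  have hp : (0 : ℚ) < (q : ℚ) ^ finrank K W := by positivity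
  rw [hd] at h1
  have h2 : ((fs (Lset W U)).card : ℚ) * ((q : ℚ) ^ (finrank K W + 1) - q ^ finrank K W) =
      q ^ (finrank K W + d) - q ^ finrank K W := by exact_mod_cast h1
  apply mul_left_cancel₀ hp.ne'
  rw [pow_succ, pow_add] at h2
  linear_combination h2

theorem swap_sum [Finite (Submodule K V)] (f : V →ₗ[K] V →ₗ[K] K) (T M : Submodule K V) (m : ℕ)
    (w : Submodule K V → Submodule K V → ℚ) :
    ∑ F ∈ fs (C3 f T m), ∑ S ∈ fs (Lset T (F ⊓ M)), w S F =
      ∑ S ∈ fs (Lset T M), ∑ F ∈ fs (C3 f S m), w S F := by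
  apply Finset.sum_comm'
  intro F S
  simp only [mem_fs, C3, Lset, Set.mem_ofPred_eq, le_inf_iff]
  constructor
  · rintro ⟨⟨h1, h2⟩, h3, ⟨h4, h5⟩, h6⟩
    exact ⟨⟨h1, h4⟩, h3, h5, h6⟩
  · rintro ⟨⟨h1, h4⟩, h3, h5, h6⟩
    exact ⟨⟨h1, h3.trans h4⟩, h3, ⟨h4, h5⟩, h6⟩

theorem ti_mono {f : V →ₗ[K] V →ₗ[K] K} {S M : Submodule K V} (h : S ≤ M)
    (hM : TotallyIsotropic f M) : TotallyIsotropic f S :=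
  fun x hx y hy => hM x (h hx) y (h hy)

theorem ti_Lset {f : V →ₗ[K] V →ₗ[K] K} (halt : ∀ v, f v v = 0) [Module.Finite K V]
    {S T : Submodule K V}
    (hT : TotallyIsotropic f T) (hS : S ∈ Lset T (LinearMap.BilinForm.orthogonal f T)) :
    TotallyIsotropic f S := by
  obtain ⟨h1, h2, h3⟩ := hS
  have hrefl : LinearMap.BilinForm.IsRefl f := LinearMap.BilinForm.IsAlt.isRefl halt
  have hne : ∃ v ∈ S, v ∉ T := by
    by_contra! hc
    have : S = T := le_antisymm hc h1
    rw [this] at h3; omega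
  obtain ⟨v, hv, hvT⟩ := hne
  have hSe : T ⊔ Submodule.span K {v} = S := by
    apply Submodule.eq_of_le_of_finrank_eq
    · exact sup_le h1 (by rwa [Submodule.span_singleton_le_iff_mem])
    · rw [Submodule.finrank_sup_span_singleton hvT, h3]
  intro x hx y hy
  rw [← hSe, Submodule.mem_sup] at hx hy
  obtain ⟨x1, hx1, x2, hx2, rfl⟩ := hx
  obtain ⟨y1, hy1, y2, hy2, rfl⟩ := hy
  obtain ⟨c, rfl⟩ := Submodule.mem_span_singleton.1 hx2
  obtain ⟨d, rfl⟩ := Submodule.mem_span_singleton.1 hy2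
  have hxv : f x1 v = 0 := h2 hv x1 hx1
  have hvy : f v y1 = 0 := hrefl _ _ (h2 hv y1 hy1)
  simp [hT x1 hx1 y1 hy1, hxv, hvy, halt v]

theorem br_ne {q : ℚ} (hq : 1 < q) (k : ℕ) : q ^ (k + 1) - 1 ≠ 0 := by
  have : 1 < q ^ (k + 1) := one_lt_pow₀ hq (by omega)
  linarith

theorem C3_card [Fintype K] [Finite V] [Finite (Submodule K V)] {q ν : ℕ}
    (hq : Fintype.card K = q) (f : V →ₗ[K] V →ₗ[K] K) (halt : ∀ v, f v v = 0)
    (hnd : LinearMap.BilinForm.Nondegenerate f) (hV : finrank K V = 2 * ν) (k : ℕ) :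
    ∀ (a : ℕ) (T : Submodule K V), TotallyIsotropic f T → finrank K T = a →
      ((fs (C3 f T (a + k))).card : ℚ) = NN q (ν - a) k := by
  have : Module.Finite K V := Module.Finite.of_finite
  have hrefl : LinearMap.BilinForm.IsRefl f := LinearMap.BilinForm.IsAlt.isRefl halt
  induction k with
  | zero =>
    intro a T hT ha
    have : fs (C3 f T (a + 0)) = {T} := by
      ext F
      simp only [mem_fs, C3, polar, Set.mem_ofPred_eq, Finset.mem_singleton]
      constructor
      · rintro ⟨⟨h1, h2⟩, h3⟩
        exact (Submodule.eq_of_le_of_finrank_eq h3 (by omega)).symm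
      · rintro rfl
        exact ⟨⟨hT, ha⟩, le_rfl⟩
    rw [this]; simp [NN]
  | succ k ih =>
    intro a T hT ha
    have h1 := swap_sum f T (LinearMap.BilinForm.orthogonal f T) (a + (k + 1)) (fun _ _ => 1)
    have hq' : (1 : ℚ) < q := by
      have : 1 < q := hq ▸ Fintype.one_lt_card
      exact_mod_cast this
    have hTo : T ≤ LinearMap.BilinForm.orthogonal f T := fun x hx y hy => hT y hy x hx
    have hfo := LinearMap.BilinForm.finrank_orthogonal hnd T
    have hl : ∑ F ∈ fs (C3 f T (a + (k + 1))), ∑ S ∈ fs (Lset T (F ⊓ LinearMap.BilinForm.orthogonal f T)), (1 : ℚ) =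
        ∑ F ∈ fs (C3 f T (a + (k + 1))), br q (k + 1) := by
      refine Finset.sum_congr rfl fun F hF => ?_
      obtain ⟨⟨h1, h2⟩, h3⟩ := (mem_fs _ _).1 hF
      have : F ⊓ LinearMap.BilinForm.orthogonal f T = F :=
        inf_eq_left.2 fun x hx y hy => h1 y (h3 hy) x hx
      rw [this, Finset.sum_const, nsmul_eq_mul, Lset_card hq h3, h2, ha]
      simp
    have hr : ∑ S ∈ fs (Lset T (LinearMap.BilinForm.orthogonal f T)), ∑ F ∈ fs (C3 f S (a + (k + 1))), (1 : ℚ) =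
        ∑ S ∈ fs (Lset T (LinearMap.BilinForm.orthogonal f T)), NN q (ν - (a + 1)) k := by
      refine Finset.sum_congr rfl fun S hS => ?_
      have hS := (mem_fs _ _).1 hS
      rw [← ih (a + 1) S (ti_Lset halt hT hS) (by rw [hS.2.2, ha])]
      rw [Finset.sum_const, nsmul_eq_mul, mul_one, add_assoc, add_comm 1 k]
    rw [hl, hr, Finset.sum_const, Finset.sum_const, nsmul_eq_mul, nsmul_eq_mul, Lset_card hq hTo,
      hfo, hV, ha] at h1
    have e : 2 * ν - a - a = 2 * (ν - a) := by omega
    rw [e, br, br] at h1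
    have hn := br_ne hq' k
    have hn1 : (q : ℚ) - 1 ≠ 0 := by linarith
    rw [NN, Nat.sub_sub]
    field_simp at h1 ⊢
    linear_combination h1

theorem C1_le [Fintype K] [Finite V] [Finite (Submodule K V)] {q ν : ℕ}
    (hq : Fintype.card K = q) (f : V →ₗ[K] V →ₗ[K] K) (halt : ∀ v, f v v = 0)
    (hnd : LinearMap.BilinForm.Nondegenerate f) (hV : finrank K V = 2 * ν) (k s t : ℕ)
    (M T : Submodule K V) (hM : M ∈ polar f s) (hTM : T ≤ M) (hT : finrank K T = t) :
    ((fs (C1 f M T (t + 1 + k) t)).card : ℚ) ≤ br q (s - t) * NN q (ν - (t + 1)) k := by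
  classical
  have h1 := swap_sum f T M (t + 1 + k) (fun _ _ => 1)
  have hr : ∑ S ∈ fs (Lset T M), ∑ F ∈ fs (C3 f S (t + 1 + k)), (1 : ℚ) =
      ∑ S ∈ fs (Lset T M), NN q (ν - (t + 1)) k := by
    refine Finset.sum_congr rfl fun S hS => ?_
    have hS := (mem_fs _ _).1 hS
    rw [← C3_card hq f halt hnd hV k (t + 1) S (ti_mono hS.2.1 hM.1) (by rw [hS.2.2, hT])]
    rw [Finset.sum_const, nsmul_eq_mul, mul_one]
  rw [hr, Finset.sum_const, nsmul_eq_mul, Lset_card hq hTM, hM.2, hT] at h1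
  rw [← h1]
  have hsub : fs (C1 f M T (t + 1 + k) t) ⊆ fs (C3 f T (t + 1 + k)) := by
    intro F hF
    rw [mem_fs] at hF ⊢
    exact ⟨hF.1, hF.2.1⟩
  calc ((fs (C1 f M T (t + 1 + k) t)).card : ℚ)
      = ∑ F ∈ fs (C1 f M T (t + 1 + k) t), (1 : ℚ) := by simp
    _ ≤ ∑ F ∈ fs (C1 f M T (t + 1 + k) t), ∑ S ∈ fs (Lset T (F ⊓ M)), (1 : ℚ) := by
        refine Finset.sum_le_sum fun F hF => ?_
        have hF := (mem_fs _ _).1 hF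
        have hq1 : 1 < q := hq ▸ Fintype.one_lt_card
        have hle : T ≤ F ⊓ M := le_inf hF.2.1 hTM
        rw [Finset.sum_const, nsmul_eq_mul, mul_one]
        have h2 : (fs (Lset T (F ⊓ M))).card ≠ 0 := by
          intro h0
          have h3 := Lset_card hq hle
          rw [h0, br] at h3
          have h4 := hF.2.2
          have hq' : (1 : ℚ) < q := by exact_mod_cast hq1
          have h5 : (1 : ℚ) < (q : ℚ) ^ (finrank K ↥(F ⊓ M) - finrank K ↥T) :=
            one_lt_pow₀ hq' (by omega)
          have h6 : 0 < ((q : ℚ) ^ (finrank K ↥(F ⊓ M) - finrank K ↥T) - 1) / ((q : ℚ) - 1) := by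
            apply div_pos <;> linarith
          rw [← h3] at h6
          simp at h6
        exact_mod_cast Nat.one_le_iff_ne_zero.2 h2
    _ ≤ _ := by
        apply Finset.sum_le_sum_of_subset_of_nonneg hsub
        intros; positivity

theorem br_ineq {q : ℚ} (hq : 1 < q) (d : ℕ) :
    br q (d + 1) - q / (q + 1) * (br q (d + 1) * br q d) ≤ 1 := by
  have b0 : br q 0 = 0 := by simp [br]
  have b1 : br q 1 = 1 := by
    have : q - 1 ≠ 0 := by linarith
    simp [br, this]
  have bs : ∀ n, br q (n + 1) = q * br q n + 1 := by
    intro n; simp only [br]; have : q - 1 ≠ 0 := by linarith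
    field_simp; ring
  have bn : ∀ n, 0 ≤ br q n := by
    intro n; induction n with
    | zero => rw [b0]
    | succ n ih => rw [bs]; nlinarith
  match d with
  | 0 => rw [b0, b1]; simp
  | d + 1 =>
    have e : br q (d + 1) ≥ 1 := by rw [bs]; nlinarith [bn d]
    have hb := bn d
    rw [bs (d + 1)]
    set x := br q (d + 1)
    have : q * x + 1 - q / (q + 1) * ((q * x + 1) * x) - 1 = q * x * (q - q * x) / (q + 1) := by
      field_simp; ring
    have h2 : q * x * (q - q * x) / (q + 1) ≤ 0 := by
      apply div_nonpos_of_nonpos_of_nonneg _ (by linarith)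
      apply mul_nonpos_of_nonneg_of_nonpos (by nlinarith) (by nlinarith)
    linarith

theorem C1_ge [Fintype K] [Finite V] [Finite (Submodule K V)] {q ν : ℕ}
    (hq : Fintype.card K = q) (f : V →ₗ[K] V →ₗ[K] K) (halt : ∀ v, f v v = 0)
    (hnd : LinearMap.BilinForm.Nondegenerate f) (hV : finrank K V = 2 * ν) (k s t : ℕ)
    (M T : Submodule K V) (hM : M ∈ polar f s) (hTM : T ≤ M) (hT : finrank K T = t) :
    br q (s - t) * NN q (ν - (t + 1)) (k + 1) -
      q / (q + 1) * (br q (s - t) * (br q (s - t - 1) * NN q (ν - (t + 2)) k)) ≤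
    ((fs (C1 f M T (t + 2 + k) t)).card : ℚ) := by
  classical
  have : Module.Finite K V := Module.Finite.of_finite
  have hq' : (1 : ℚ) < q := by
    have : 1 < q := hq ▸ Fintype.one_lt_card
    exact_mod_cast this
  have h1 := swap_sum f T M (t + 2 + k) (fun _ _ => 1)
  have hr : ∑ S ∈ fs (Lset T M), ∑ F ∈ fs (C3 f S (t + 2 + k)), (1 : ℚ) =
      ∑ S ∈ fs (Lset T M), NN q (ν - (t + 1)) (k + 1) := by
    refine Finset.sum_congr rfl fun S hS => ?_
    have hS := (mem_fs _ _).1 hS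
    rw [← C3_card hq f halt hnd hV (k + 1) (t + 1) S (ti_mono hS.2.1 hM.1) (by rw [hS.2.2, hT])]
    rw [Finset.sum_const, nsmul_eq_mul, mul_one]
    congr 4; omega
  rw [hr, Finset.sum_const, nsmul_eq_mul, Lset_card hq hTM, hM.2, hT] at h1
  have h2 := swap_sum f T M (t + 2 + k) (fun S F => ∑ R ∈ fs (Lset S (F ⊓ M)), 1)
  have hr2 : ∑ S ∈ fs (Lset T M), ∑ F ∈ fs (C3 f S (t + 2 + k)), ∑ R ∈ fs (Lset S (F ⊓ M)), (1 : ℚ) =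
      ∑ S ∈ fs (Lset T M), br q (s - t - 1) * NN q (ν - (t + 2)) k := by
    refine Finset.sum_congr rfl fun S hS => ?_
    have hS := (mem_fs _ _).1 hS
    rw [swap_sum f S M (t + 2 + k) (fun _ _ => 1)]
    have : ∑ R ∈ fs (Lset S M), ∑ F ∈ fs (C3 f R (t + 2 + k)), (1 : ℚ) =
        ∑ R ∈ fs (Lset S M), NN q (ν - (t + 2)) k := by
      refine Finset.sum_congr rfl fun R hR => ?_
      have hR := (mem_fs _ _).1 hR
      rw [← C3_card hq f halt hnd hV k (t + 2) R (ti_mono hR.2.1 hM.1)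
        (by rw [hR.2.2, hS.2.2, hT])]
      rw [Finset.sum_const, nsmul_eq_mul, mul_one]
    rw [this, Finset.sum_const, nsmul_eq_mul, Lset_card hq hS.2.1, hM.2, hS.2.2, hT, Nat.sub_sub]
  rw [hr2, Finset.sum_const, nsmul_eq_mul, Lset_card hq hTM, hM.2, hT] at h2
  rw [← h1, ← h2, Finset.mul_sum, ← Finset.sum_sub_distrib]
  have hsub : fs (C1 f M T (t + 2 + k) t) =
      (fs (C3 f T (t + 2 + k))).filter (fun F => t + 1 ≤ finrank K ↥(F ⊓ M)) := by
    ext F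
    simp only [mem_fs, Finset.mem_filter, C1, C3, Set.mem_ofPred_eq, and_assoc]
  rw [hsub, Finset.card_filter]
  push_cast
  refine Finset.sum_le_sum fun F hF => ?_
  have hF := (mem_fs _ _).1 hF
  have hle : T ≤ F ⊓ M := le_inf hF.2 hTM
  have e : ∑ S ∈ fs (Lset T (F ⊓ M)), ∑ R ∈ fs (Lset S (F ⊓ M)), (1 : ℚ) =
      ∑ S ∈ fs (Lset T (F ⊓ M)), br q (finrank K ↥(F ⊓ M) - t - 1) := by
    refine Finset.sum_congr rfl fun S hS => ?_
    have hS := (mem_fs _ _).1 hS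
    rw [Finset.sum_const, nsmul_eq_mul, mul_one, Lset_card hq hS.2.1, hS.2.2, hT, Nat.sub_sub]
  rw [e, Finset.sum_const, Finset.sum_const, nsmul_eq_mul, nsmul_eq_mul, Lset_card hq hle, hT,
    mul_one]
  have hge : t ≤ finrank K ↥(F ⊓ M) := hT ▸ Submodule.finrank_mono hle
  obtain ⟨d, hd⟩ := Nat.exists_eq_add_of_le hge
  rw [hd, Nat.add_sub_cancel_left]
  match d with
  | 0 => simp [br]
  | d + 1 =>
    rw [if_pos (by omega), Nat.add_sub_cancel]
    exact br_ineq hq' d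

theorem C2_le [Fintype K] [Finite V] [Finite (Submodule K V)] {q ν : ℕ}
    (hq : Fintype.card K = q) (f : V →ₗ[K] V →ₗ[K] K) (halt : ∀ v, f v v = 0)
    (hnd : LinearMap.BilinForm.Nondegenerate f) (hV : finrank K V = 2 * ν) (k t : ℕ)
    (M T : Submodule K V) (hM : M ∈ polar f (t + k + 1)) (hTM : T ≤ M) (hT : finrank K T = t) :
    ((fs (C2 f M T (t + k))).card : ℚ) ≤ NN q (ν - t) k + q ^ (t + k + 1) := by
  classical
  have : Module.Finite K V := Module.Finite.of_finite
  have hrefl : LinearMap.BilinForm.IsRefl f := LinearMap.BilinForm.IsAlt.isRefl halt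
  have hsub : fs (C2 f M T (t + k)) ⊆
      fs (C3 f T (t + k)) ∪ fs {F | F ∈ polar f (t + k) ∧ F ≤ M} := by
    intro F hF
    rw [Finset.mem_union, mem_fs, mem_fs]
    have hF := (mem_fs _ _).1 hF
    exact hF
  have h1 := (Finset.card_le_card hsub).trans (Finset.card_union_le _ _)
  have h2 : (fs {F | F ∈ polar f (t + k) ∧ F ≤ M}).card ≤
      (fs (Lset (LinearMap.BilinForm.orthogonal f M) ⊤)).card := by
    apply Finset.card_le_card_of_injOn (fun F => LinearMap.BilinForm.orthogonal f F)
    · intro F hF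
      obtain ⟨hF1, hF2⟩ := (mem_fs _ _).1 hF
      refine (mem_fs _ _).2 ⟨LinearMap.BilinForm.orthogonal_le hF2, le_top, ?_⟩
      rw [LinearMap.BilinForm.finrank_orthogonal hnd, LinearMap.BilinForm.finrank_orthogonal hnd,
        hF1.2, hM.2]
      have := Submodule.finrank_le M
      have := hM.2
      omega
    · intro F _ G _ h
      rw [← LinearMap.BilinForm.orthogonal_orthogonal hnd hrefl F,
        ← LinearMap.BilinForm.orthogonal_orthogonal hnd hrefl G]
      exact congrArg _ h
  have h3 := Lset_card hq (le_top : LinearMap.BilinForm.orthogonal f M ≤ ⊤)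
  have hq1 : 1 < q := hq ▸ Fintype.one_lt_card
  have hq' : (2 : ℚ) ≤ q := by exact_mod_cast hq1
  have h4 : br q (finrank K (⊤ : Submodule K V) - finrank K (LinearMap.BilinForm.orthogonal f M)) ≤
      q ^ (t + k + 1) := by
    have h5 := Submodule.finrank_le M
    rw [LinearMap.BilinForm.finrank_orthogonal hnd, finrank_top, hM.2]
    rw [hM.2] at h5
    have : finrank K V - (finrank K V - (t + k + 1)) = t + k + 1 := by omega
    rw [this, br, div_le_iff₀ (by linarith)]
    have : (0 : ℚ) < q ^ (t + k + 1) := by positivity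
    nlinarith
  rw [← C3_card hq f halt hnd hV k t T (ti_mono hTM hM.1) hT]
  have h1' : ((fs (C2 f M T (t + k))).card : ℚ) ≤ (fs (C3 f T (t + k))).card +
    (fs {F | F ∈ polar f (t + k) ∧ F ≤ M}).card := by exact_mod_cast h1
  have h2' : ((fs {F | F ∈ polar f (t + k) ∧ F ≤ M}).card : ℚ) ≤
      (fs (Lset (LinearMap.BilinForm.orthogonal f M) ⊤)).card := by exact_mod_cast h2
  linarith

theorem C2_ge [Finite (Submodule K V)] (f : V →ₗ[K] V →ₗ[K] K) (m : ℕ) (M T : Submodule K V) :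
    (fs (C3 f T m)).card ≤ (fs (C2 f M T m)).card := by
  apply Finset.card_le_card
  intro F hF
  exact (mem_fs _ _).2 (Or.inl ((mem_fs _ _).1 hF))

theorem C4_card [Fintype K] [Finite V] [Finite (Submodule K V)] {q ν : ℕ}
    (hq : Fintype.card K = q) (f : V →ₗ[K] V →ₗ[K] K) (halt : ∀ v, f v v = 0)
    (hnd : LinearMap.BilinForm.Nondegenerate f) (hV : finrank K V = 2 * ν) (k t : ℕ)
    (S : Submodule K V) (hS : S ∈ polar f (t + 1)) :
    ((fs (C4 f S (t + k) t)).card : ℚ) =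
      (fs {T : Submodule K V | T ≤ S ∧ finrank K T = t}).card * NN q (ν - t) k -
      ((fs {T : Submodule K V | T ≤ S ∧ finrank K T = t}).card - 1) *
        (fs (C3 f S (t + k))).card := by
  classical
  have : Module.Finite K V := Module.Finite.of_finite
  set H := fs {T : Submodule K V | T ≤ S ∧ finrank K T = t} with hH
  have h1 : ∑ T ∈ H, ∑ F ∈ fs (C3 f T (t + k)), (1 : ℚ) =
      ∑ F ∈ fs (C4 f S (t + k) t), ∑ T ∈ H.filter (fun T => T ≤ F), (1 : ℚ) := by
    apply Finset.sum_comm'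
    intro T F
    simp only [hH, mem_fs, Finset.mem_filter, C3, C4, Set.mem_ofPred_eq]
    constructor
    · rintro ⟨⟨a, b⟩, c, d⟩
      refine ⟨⟨⟨a, b⟩, d⟩, c, ?_⟩
      rw [← b]; exact Submodule.finrank_mono (le_inf d a)
    · rintro ⟨⟨⟨a, b⟩, d⟩, c, _⟩
      exact ⟨⟨a, b⟩, c, d⟩
  have h2 : ∑ T ∈ H, ∑ F ∈ fs (C3 f T (t + k)), (1 : ℚ) = ∑ T ∈ H, NN q (ν - t) k := by
    refine Finset.sum_congr rfl fun T hT => ?_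
    obtain ⟨hT1, hT2⟩ := (mem_fs _ _).1 hT
    rw [← C3_card hq f halt hnd hV k t T (ti_mono hT1 hS.1) hT2]
    rw [Finset.sum_const, nsmul_eq_mul, mul_one]
  have h3 : ∑ F ∈ fs (C4 f S (t + k) t), ∑ T ∈ H.filter (fun T => T ≤ F), (1 : ℚ) =
      ∑ F ∈ fs (C4 f S (t + k) t), (1 + (H.card - 1) * if S ≤ F then (1 : ℚ) else 0) := by
    refine Finset.sum_congr rfl fun F hF => ?_
    obtain ⟨hF1, hF2⟩ := (mem_fs _ _).1 hF
    rw [Finset.sum_const, nsmul_eq_mul, mul_one]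
    by_cases hSF : S ≤ F
    · rw [if_pos hSF, Finset.filter_true_of_mem]
      · ring
      · intro T hT
        exact ((mem_fs _ _).1 hT).1.trans hSF
    · rw [if_neg hSF]
      have hlt : F ⊓ S < S := lt_of_le_of_ne inf_le_right (fun h => hSF (inf_eq_right.1 h))
      have hlt' := Submodule.finrank_lt_finrank_of_lt hlt
      rw [hS.2] at hlt'
      have : H.filter (fun T => T ≤ F) = {F ⊓ S} := by
        ext T
        simp only [hH, mem_fs, Finset.mem_filter, Set.mem_ofPred_eq, Finset.mem_singleton]
        constructor
        · rintro ⟨⟨a, b⟩, c⟩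
          exact Submodule.eq_of_le_of_finrank_eq (le_inf c a) (by omega)
        · rintro rfl
          exact ⟨⟨inf_le_right, by omega⟩, inf_le_left⟩
      rw [this]; simp
  have h4 : (fs (C3 f S (t + k))) = (fs (C4 f S (t + k) t)).filter (fun F => S ≤ F) := by
    ext F
    simp only [mem_fs, Finset.mem_filter, C3, C4, Set.mem_ofPred_eq]
    constructor
    · rintro ⟨a, b⟩
      refine ⟨⟨a, ?_⟩, b⟩
      rw [inf_eq_right.2 b, hS.2]; omega
    · rintro ⟨⟨a, _⟩, b⟩
      exact ⟨a, b⟩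
  rw [← h1, h2, Finset.sum_add_distrib, ← Finset.mul_sum, Finset.sum_const, Finset.sum_const,
    ← Finset.sum_filter, ← h4, Finset.sum_const] at h3
  simp only [nsmul_eq_mul, mul_one] at h3
  linarith

theorem ex_sub [Module.Finite K V] (S : Submodule K V) (t : ℕ) (h : t ≤ finrank K S) :
    ∃ T : Submodule K V, T ≤ S ∧ finrank K T = t := by
  induction t with
  | zero => exact ⟨⊥, bot_le, by simp⟩
  | succ t ih =>
    obtain ⟨T, h1, h2⟩ := ih (by omega)
    have : ∃ v ∈ S, v ∉ T := by
      by_contra! hc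
      have : S = T := le_antisymm hc h1
      rw [this] at h; omega
    obtain ⟨v, hv, hvT⟩ := this
    refine ⟨T ⊔ Submodule.span K {v}, sup_le h1 ?_, ?_⟩
    · rwa [Submodule.span_singleton_le_iff_mem]
    · rw [Submodule.finrank_sup_span_singleton hvT, h2]

theorem H_pos [Finite (Submodule K V)] [Module.Finite K V] (t : ℕ) (S : Submodule K V)
    (hS : finrank K S = t + 1) :
    0 < (fs {T : Submodule K V | T ≤ S ∧ finrank K T = t}).card := by
  obtain ⟨T, h1, h2⟩ := ex_sub S t (by omega)
  exact Finset.card_pos.2 ⟨T, (mem_fs _ _).2 ⟨h1, h2⟩⟩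

theorem NN_ge {q : ℚ} (hq : 1 < q) (k : ℕ) : ∀ d, k ≤ d → 1 ≤ NN q d k := by
  induction k with
  | zero => intro d _; simp [NN]
  | succ k ih =>
    intro d hd
    have h1 := ih (d - 1) (by omega)
    have h2 : 1 ≤ (q ^ (2 * d) - 1) / (q ^ (k + 1) - 1) := by
      have : 1 < q ^ (k + 1) := one_lt_pow₀ hq (by omega)
      rw [le_div_iff₀ (by linarith), one_mul]
      have : q ^ (k + 1) ≤ q ^ (2 * d) := pow_le_pow_right₀ hq.le (by omega)
      linarith
    rw [NN]
    nlinarith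

theorem num2 {q : ℚ} (hq : 1 < q) (n i j : ℕ) (hij : j < i) (hn : i + 1 ≤ n) (h : ℚ) (hh : 0 < h) :
    NN q (n - 1) j * (h * NN q n (i + 1) - (h - 1) * NN q (n - 1) i) <
    NN q (n - 1) i * (h * NN q n (j + 1) - (h - 1) * NN q (n - 1) j) := by
  have hP := NN_ge hq i (n - 1) (by omega)
  have hR := NN_ge hq j (n - 1) (by omega)
  rw [NN, NN]
  set P := NN q (n - 1) i
  set R := NN q (n - 1) j
  have h1 : 1 < q ^ (j + 1) := one_lt_pow₀ hq (by omega)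
  have h2 : q ^ (j + 1) < q ^ (i + 1) := pow_lt_pow_right₀ hq (by omega)
  have h3 : 1 < q ^ (2 * n) := one_lt_pow₀ hq (by omega)
  have h4 : (q ^ (2 * n) - 1) / (q ^ (i + 1) - 1) < (q ^ (2 * n) - 1) / (q ^ (j + 1) - 1) :=
    div_lt_div_of_pos_left (by linarith) (by linarith) (by linarith)
  have h5 : 0 < h * P * R := by positivity
  have := mul_lt_mul_of_pos_left h4 h5
  linarith

set_option maxHeartbeats 1000000 in
theorem core {q a b c Z P : ℚ} (hq : 2 ≤ q) (hb : q ≤ b) (hab : b ≤ a) (hc : q ≤ c)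
    (hZ : a ^ 2 * b * c * q ^ 2 ≤ Z) (hP : 1 ≤ P) :
    (q ^ 2 * a - 1) / (q - 1) * ((q ^ 2 * Z - 1) / (q * a - 1) * ((Z - 1) / (a - 1) * P) + c * a * q ^ 2) <
    ((q * b - 1) / (q - 1) * ((Z - 1) / (a - 1) * P) -
      q / (q + 1) * ((q * b - 1) / (q - 1) * ((b - 1) / (q - 1) * P))) * ((q ^ 2 * Z - 1) / (b - 1)) := by
  have ha : 2 ≤ a := by linarith
  have hqa : 4 ≤ q * a := by nlinarith
  have hbig : a ≤ a ^ 2 * b * c * q ^ 2 := by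
    have e : 1 ≤ a * (b * (c * q ^ 2)) := by
      have h1 : 1 ≤ q ^ 2 := by nlinarith
      have h2 : 1 ≤ c * q ^ 2 := by nlinarith
      have h3 : 1 ≤ b * (c * q ^ 2) := by nlinarith
      nlinarith
    calc a = a * 1 := by ring
      _ ≤ a * (a * (b * (c * q ^ 2))) := by gcongr
      _ = _ := by ring
  have hZa : a ≤ Z := hbig.trans hZ
  have hq2 : q ≤ q ^ 2 := by nlinarith
  have hqZ : q * a ≤ q ^ 2 * Z := by
    apply mul_le_mul hq2 hZa (by linarith) (by positivity)
  have hq1 : 0 < q - 1 := by linarith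
  have ha1 : 0 < a - 1 := by linarith
  have hb1 : 0 < b - 1 := by linarith
  have hZ1 : 0 < Z - 1 := by linarith
  have hqa1 : 0 < q * a - 1 := by linarith
  have hqZ1 : 0 < q ^ 2 * Z - 1 := by linarith
  have hapos : 0 < a := by linarith
  have hbpos : 0 < b := by linarith
  have hcpos : 0 < c := by linarith
  have hqpos : 0 < q := by linarith
  have hZpos : 0 < Z := by linarith
  set u := (a - 1) / (Z - 1) with hu
  set v := (q * a - 1) / (q ^ 2 * Z - 1) with hv
  have hupos : 0 < u := by positivity
  have hvpos : 0 < v := by positivity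
  have hu1 : u ≤ a / Z := by
    rw [hu, div_le_div_iff₀ hZ1 hZpos]; nlinarith
  have hv1 : v ≤ q * a / (q ^ 2 * Z) := by
    rw [hv, div_le_div_iff₀ hqZ1 (by positivity)]; nlinarith
  have hW : 0 < a ^ 2 * b * c * q ^ 2 := by positivity
  have hu2 : u ≤ 1 / (a * b * c * q ^ 2) := by
    refine hu1.trans ?_
    rw [div_le_div_iff₀ hZpos (by positivity)]
    calc a * (a * b * c * q ^ 2) = a ^ 2 * b * c * q ^ 2 := by ring
      _ ≤ 1 * Z := by linarith
  have hv2 : v ≤ 1 / (a * b * c * q ^ 3) := by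
    refine hv1.trans ?_
    rw [div_le_div_iff₀ (by positivity) (by positivity)]
    calc q * a * (a * b * c * q ^ 3) = q ^ 2 * (a ^ 2 * b * c * q ^ 2) := by ring
      _ ≤ 1 * (q ^ 2 * Z) := by rw [one_mul]; gcongr
  -- delta
  have hd : (q ^ 2 * a - 1) * (b - 1) * (c * a * q ^ 2 * (v * u)) ≤ 1 / 8 := by
    have h1 : (q ^ 2 * a - 1) * (b - 1) ≤ q ^ 2 * a * b := by nlinarith
    calc (q ^ 2 * a - 1) * (b - 1) * (c * a * q ^ 2 * (v * u))
        ≤ q ^ 2 * a * b * (c * a * q ^ 2 * (1 / (a * b * c * q ^ 3) * (1 / (a * b * c * q ^ 2)))) := by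
          gcongr
      _ = 1 / (b * c * q) := by field_simp
      _ ≤ 1 / (2 * 2 * 2) := by gcongr <;> linarith
      _ = 1 / 8 := by norm_num
  have he : (q * b - 1) * (q * a - 1) * (q / (q + 1) * ((b - 1) / (q - 1)) * u) ≤ b / 3 := by
    calc (q * b - 1) * (q * a - 1) * (q / (q + 1) * ((b - 1) / (q - 1)) * u)
        ≤ (q * b) * (q * a) * (q / (q + 1) * (b / (q - 1)) * (1 / (a * b * c * q ^ 2))) := by
          gcongr <;> linarith
      _ = (q * b) / ((q + 1) * (q - 1) * c) := by field_simp
      _ ≤ (c * b) / (3 * c) := by gcongr; nlinarith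
      _ = b / 3 := by field_simp
  have hmain : b ≤ (q * b - 1) * (q * a - 1) - (q ^ 2 * a - 1) * (b - 1) := by
    have : (q * b - 1) * (q * a - 1) - (q ^ 2 * a - 1) * (b - 1) = (q - 1) * (q * a - b) := by ring
    rw [this]
    have : q * b ≤ q * a := by gcongr
    nlinarith
  have hfin : (q ^ 2 * a - 1) * (b - 1) * (1 + c * a * q ^ 2 * (v * u)) <
      (q * b - 1) * (q * a - 1) * (1 - q / (q + 1) * ((b - 1) / (q - 1)) * u) := by
    rw [mul_add, mul_sub, mul_one, mul_one]
    linarith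
  have hY : 0 < P * ((q ^ 2 * Z - 1) * (Z - 1) / ((q - 1) * (b - 1) * (q * a - 1) * (a - 1))) := by
    positivity
  have hfin2 := mul_lt_mul_of_pos_left hfin hY
  have hcp : c * a * q ^ 2 ≤ c * a * q ^ 2 * P := le_mul_of_one_le_right (by positivity) hP
  have hqa2 : 0 ≤ (q ^ 2 * a - 1) / (q - 1) := by
    apply div_nonneg _ hq1.le
    have : q * a ≤ q ^ 2 * a := mul_le_mul_of_nonneg_right hq2 hapos.le
    linarith
  calc _ ≤ (q ^ 2 * a - 1) / (q - 1) * ((q ^ 2 * Z - 1) / (q * a - 1) * ((Z - 1) / (a - 1) * P) + c * a * q ^ 2 * P) := by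
        gcongr
    _ = P * ((q ^ 2 * Z - 1) * (Z - 1) / ((q - 1) * (b - 1) * (q * a - 1) * (a - 1))) * ((q ^ 2 * a - 1) * (b - 1) * (1 + c * a * q ^ 2 * (v * u))) := by
        rw [hu, hv]
        field_simp
    _ < _ := hfin2
    _ = _ := by
        rw [hu]
        field_simp

theorem num1 {q : ℚ} (hq : 2 ≤ q) (n i j t : ℕ) (hij : j ≤ i) (ht : 1 ≤ t)
    (hn : 2 * i + j + 7 + t ≤ 2 * n) :
    br q (i + 3) * NN q (n - 1) j * (NN q n (i + 2) + q ^ (t + (i + 2) + 1)) <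
    (br q (j + 2) * NN q (n - 1) (i + 1) -
      q / (q + 1) * (br q (j + 2) * (br q (j + 1) * NN q (n - 2) i))) * NN q n (j + 1) := by
  have hq1 : 1 < q := by linarith
  have hP := NN_ge hq1 i (n - 2) (by omega)
  have hR := NN_ge hq1 j (n - 1) (by omega)
  have e1 : NN q n (i + 2) = (q ^ (2 * n) - 1) / (q ^ (i + 2) - 1) * NN q (n - 1) (i + 1) := rfl
  have e2 : NN q (n - 1) (i + 1) = (q ^ (2 * (n - 1)) - 1) / (q ^ (i + 1) - 1) * NN q (n - 2) i := rfl
  have e3 : NN q n (j + 1) = (q ^ (2 * n) - 1) / (q ^ (j + 1) - 1) * NN q (n - 1) j := rfl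
  rw [e1, e2, e3]
  have h2n : q ^ (2 * n) = q ^ 2 * q ^ (2 * (n - 1)) := by rw [← pow_add]; congr 1; omega
  have hb : q ≤ q ^ (j + 1) := le_self_pow₀ hq1.le (by omega)
  have hc : q ≤ q ^ t := le_self_pow₀ hq1.le (by omega)
  have hab : q ^ (j + 1) ≤ q ^ (i + 1) := pow_le_pow_right₀ hq1.le (by omega)
  have hZ : (q ^ (i + 1)) ^ 2 * q ^ (j + 1) * q ^ t * q ^ 2 ≤ q ^ (2 * (n - 1)) := by
    rw [← pow_mul, ← pow_add, ← pow_add, ← pow_add]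
    exact pow_le_pow_right₀ hq1.le (by omega)
  have := core hq hb hab hc hZ hP
  have := mul_lt_mul_of_pos_right this (show 0 < NN q (n - 1) j by linarith)
  have f1 : q ^ (i + 3) = q ^ 2 * q ^ (i + 1) := by ring
  have f2 : q ^ (i + 2) = q * q ^ (i + 1) := by ring
  have f3 : q ^ (j + 2) = q * q ^ (j + 1) := by ring
  have f4 : q ^ (t + (i + 2) + 1) = q ^ t * q ^ (i + 1) * q ^ 2 := by ring
  simp only [br]
  rw [h2n, f1, f2, f3, f4]
  linarith

end helpers

theorem stmt_17
    (q ν m₁ m₂ t : ℕ) (hq : IsPrimePow q)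
    {K : Type} [Field K] [Fintype K] (hK : Fintype.card K = q)
    (f : (Fin (2 * ν) → K) →ₗ[K] (Fin (2 * ν) → K) →ₗ[K] K)
    (halt : ∀ v, f v v = 0)
    (hnd : ∀ v, (∀ w, f v w = 0) → v = 0)
    (hν : 0 < ν) (ht : 0 < t) (hm : m₂ < m₁) (hmt : t + 1 ≤ m₂)
    (hdim : 2 * m₁ + m₂ + 2 ≤ 2 * ν)
    (M : Submodule K (Fin (2 * ν) → K)) (hM : M ∈ polar f (m₂ + 1))
    (T : Submodule K (Fin (2 * ν) → K)) (hTM : T ≤ M) (hT : finrank K T = t)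
    (M' : Submodule K (Fin (2 * ν) → K)) (hM' : M' ∈ polar f (m₁ + 1))
    (T' : Submodule K (Fin (2 * ν) → K)) (hTM' : T' ≤ M') (hT' : finrank K T' = t)
    (S : Submodule K (Fin (2 * ν) → K)) (hS : S ∈ polar f (t + 1)) :
    (C1 f M' T' m₂ t).ncard * (C2 f M' T' m₁).ncard <
        (C1 f M T m₁ t).ncard * (C2 f M T m₂).ncard ∧
      (C3 f S m₂).ncard * (C4 f S m₁ t).ncard <
        (C3 f S m₁).ncard * (C4 f S m₂ t).ncard := by
  have hnd' : LinearMap.BilinForm.Nondegenerate f := by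
    refine ⟨hnd, fun y hy => hnd y fun w => ?_⟩
    have hrefl : LinearMap.BilinForm.IsRefl f := LinearMap.BilinForm.IsAlt.isRefl halt
    exact hrefl _ _ (hy w)
  have hV : finrank K (Fin (2 * ν) → K) = 2 * ν := by simp
  have hq1 : 1 < q := hK ▸ Fintype.one_lt_card
  have hq2 : (2 : ℚ) ≤ q := by exact_mod_cast hq1
  have hq1' : (1 : ℚ) < q := by linarith
  obtain ⟨j, rfl⟩ : ∃ j, m₂ = t + 1 + j := ⟨m₂ - (t + 1), by omega⟩
  obtain ⟨i, rfl⟩ : ∃ i, m₁ = t + 2 + i := ⟨m₁ - (t + 2), by omega⟩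
  simp only [← card_fs]
  constructor
  · have a1 := C1_le hK f halt hnd' hV j (t + 2 + i + 1) t M' T' hM' hTM' hT'
    have a2 := C2_le hK f halt hnd' hV (i + 2) t M' T'
      (by rw [show t + (i + 2) + 1 = t + 2 + i + 1 by omega]; exact hM') hTM' hT'
    have a3 := C1_ge hK f halt hnd' hV i (t + 1 + j + 1) t M T hM hTM hT
    have a4 := C2_ge f (t + (j + 1)) M T
    have a5 := C3_card hK f halt hnd' hV (j + 1) t T (ti_mono hTM hM.1) hT
    have a6 := num1 hq2 (ν - t) i j t (by omega) ht (by omega)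
    rw [show t + (i + 2) = t + 2 + i by omega] at a2 a6
    rw [show t + (j + 1) = t + 1 + j by omega] at a4 a5
    rw [show t + 2 + i + 1 - t = i + 3 by omega] at a1
    rw [show t + 1 + j + 1 - t = j + 2 by omega, show j + 2 - 1 = j + 1 by omega] at a3
    rw [Nat.sub_sub, Nat.sub_sub] at a6
    have a4' : ((fs (C3 f T (t + 1 + j))).card : ℚ) ≤ (fs (C2 f M T (t + 1 + j))).card := by
      exact_mod_cast a4
    rw [a5] at a4'
    have p1 := NN_ge hq1' (j + 1) (ν - t) (by omega)
    have b1 := mul_le_mul a1 a2 (by positivity) (le_trans (by positivity) a1)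
    have b2 := mul_le_mul a3 a4' (by linarith) (by positivity)
    have := b1.trans_lt (a6.trans_le b2)
    exact_mod_cast this
  · have a1 := C4_card hK f halt hnd' hV (i + 2) t S hS
    have a2 := C4_card hK f halt hnd' hV (j + 1) t S hS
    have a3 := C3_card hK f halt hnd' hV (i + 1) (t + 1) S hS.1 hS.2
    have a4 := C3_card hK f halt hnd' hV j (t + 1) S hS.1 hS.2
    have a5 := num2 hq1' (ν - t) (i + 1) j (by omega) (by omega) _
      (Nat.cast_pos.2 (H_pos t S hS.2))
    rw [show t + (i + 2) = t + 2 + i by omega] at a1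
    rw [show t + 1 + (i + 1) = t + 2 + i by omega] at a3
    rw [show t + (j + 1) = t + 1 + j by omega] at a2
    rw [a3] at a1
    rw [a4] at a2
    rw [Nat.sub_sub, ← a1, ← a2, ← a3, ← a4] at a5
    exact_mod_cast a5

end
end

section
/- Let q be a prime power and let ν, m₁, m₂, t be positive integers with ν > m₁ ≥ t+1, ν > m₂ ≥ t+1, and 2ν ≥ m₁ + 2m₂ + 3. Suppose ℱ₁ ⊆ 𝒫_{m₁} and ℱ₂ ⊆ 𝒫_{m₂} are nonempty maximal non-trivial cross t-intersecting families with (τ_t(ℱ₁), τ_t(ℱ₂)) = (t, t+1). Then one of the following holds: (1) ℱ₁ = 𝒞₁(M,T;m₁,t) and ℱ₂ = 𝒞₂(M,T;m₂) for some M ∈ 𝒫_{m₂+1} and t-dimensional subspace T of M; (2) ℱ₁ = 𝒞₃(S;m₁) and ℱ₂ = 𝒞₄(S;m₂,t) for some S ∈ 𝒫_{t+1}; (3) |ℱ₁|·|ℱ₂| < c₁(ν,m₁,m₂,t). -/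
open Finset Module

noncomputable section

variable {K V : Type*} [Field K] [AddCommGroup V] [Module K V]

set_option linter.unusedSectionVars false

namespace Aux

def gs (q d : ℕ) : ℕ := ∑ i ∈ Finset.range d, q ^ i

lemma gs_succ (q d : ℕ) : gs q (d + 1) = gs q d + q ^ d := by
  simp [gs, Finset.sum_range_succ]

lemma gs_mul (p d : ℕ) : gs (p + 1) d * p + 1 = (p + 1) ^ d := by
  induction d with
  | zero => simp [gs]
  | succ d ih => rw [gs_succ, pow_succ, ← ih]; ring

lemma gs_lt (q d : ℕ) (hq : 2 ≤ q) : gs q d < q ^ d := by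
  obtain ⟨p, rfl⟩ : ∃ p, q = p + 1 := ⟨q - 1, by omega⟩
  have := gs_mul p d
  have h : gs (p + 1) d * 1 ≤ gs (p + 1) d * p := Nat.mul_le_mul_left _ (by omega)
  omega

def ovr (A W : Submodule K V) : Set (Submodule K V) :=
  {B | A ≤ B ∧ B ≤ W ∧ finrank K B = finrank K A + 1}

variable [Fintype K] [FiniteDimensional K V]

lemma finV (K : Type*) {V : Type*} [Field K] [AddCommGroup V] [Module K V] [Fintype K]
    [FiniteDimensional K V] : Finite V := Module.finite_of_finite K

lemma finS : Finite (Submodule K V) := by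
  have : Finite V := finV K
  infer_instance

lemma two_le : 2 ≤ Fintype.card K := Fintype.one_lt_card


lemma finrank_sup_span {A : Submodule K V} {v : V} (hv : v ∉ A) :
    finrank K ↥(A ⊔ Submodule.span K {v}) = finrank K A + 1 := by
  apply le_antisymm
  · have h1 := Submodule.finrank_sup_add_finrank_inf_eq A (Submodule.span K {v})
    have h2 : finrank K ↥(Submodule.span K {v}) ≤ 1 := by
      simpa using finrank_span_le_card (R := K) ({v} : Set V)
    omega
  · apply Submodule.finrank_lt_finrank_of_lt
    refine lt_of_le_of_ne le_sup_left fun h => hv ?_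
    rw [h]
    exact le_sup_right (a := A) (Submodule.mem_span_singleton_self v)

open Classical in
lemma diffcard [Fintype V] {A B : Submodule K V} (h : A ≤ B) :
    (Finset.univ.filter (fun v : V => v ∈ B ∧ v ∉ A)).card + Fintype.card K ^ finrank K A
      = Fintype.card K ^ finrank K B := by
  have hc : ∀ C : Submodule K V, (Finset.univ.filter (fun v : V => v ∈ C)).card
      = Fintype.card K ^ finrank K C := by
    intro C
    rw [← Module.card_eq_pow_finrank (K := K) (V := C), Fintype.card_subtype]
  rw [← hc A, ← hc B, ← Finset.card_union_of_disjoint]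
  · congr 1
    ext v
    simp only [Finset.mem_union, Finset.mem_filter, Finset.mem_univ, true_and]
    constructor
    · rintro (h1 | h1)
      · exact h1.1
      · exact h h1
    · intro h1
      by_cases h2 : v ∈ A
      · exact Or.inr h2
      · exact Or.inl ⟨h1, h2⟩
  · rw [Finset.disjoint_left]
    intro v h1 h2
    simp only [Finset.mem_filter, Finset.mem_univ, true_and] at h1 h2
    exact h1.2 h2

open Classical in
lemma over_card {A W : Submodule K V} (h : A ≤ W) (d : ℕ)
    (hd : finrank K W = finrank K A + d) : (ovr A W).ncard = gs (Fintype.card K) d := by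
  have : Finite V := finV K
  have := Fintype.ofFinite V
  have := Fintype.ofFinite (Submodule K V)
  set q := Fintype.card K with hq
  have hq2 : 2 ≤ q := two_le
  have key := Finset.card_eq_sum_card_fiberwise (f := fun v : V => A ⊔ Submodule.span K {v})
    (s := Finset.univ.filter (fun v : V => v ∈ W ∧ v ∉ A)) (t := (ovr A W).toFinset) (by
      intro v hv
      simp only [Finset.coe_filter, Finset.mem_univ, true_and, Set.mem_ofPred_eq] at hv
      simp only [Set.coe_toFinset]
      refine ⟨le_sup_left, sup_le h ?_, finrank_sup_span hv.2⟩
      rw [Submodule.span_singleton_le_iff_mem]; exact hv.1)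
  have h2 : ∀ B ∈ (ovr A W).toFinset,
      ((Finset.univ.filter (fun v : V => v ∈ W ∧ v ∉ A)).filter
        (fun v => A ⊔ Submodule.span K {v} = B)).card = q ^ (finrank K A + 1) - q ^ finrank K A := by
    intro B hB
    rw [Set.mem_toFinset] at hB
    obtain ⟨h1, h2, h3⟩ := hB
    rw [← h3, ← diffcard h1, Nat.add_sub_cancel]
    congr 1
    ext v
    simp only [Finset.mem_filter, Finset.mem_univ, true_and]
    constructor
    · rintro ⟨⟨a, b⟩, rfl⟩
      exact ⟨le_sup_right (a := A) (Submodule.mem_span_singleton_self v), b⟩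
    · rintro ⟨a, b⟩
      refine ⟨⟨h2 a, b⟩, ?_⟩
      apply Submodule.eq_of_le_of_finrank_le
      · exact sup_le h1 (by rw [Submodule.span_singleton_le_iff_mem]; exact a)
      · rw [finrank_sup_span b, h3]
  rw [Finset.sum_congr rfl h2, Finset.sum_const, smul_eq_mul] at key
  have h3 := diffcard h
  rw [key, hd, ← Set.ncard_eq_toFinset_card'] at h3
  obtain ⟨p, hp⟩ : ∃ p, q = p + 1 := ⟨q - 1, by omega⟩
  rw [← hq, hp] at h3
  rw [hp]
  have h4 := gs_mul p d
  have h5 : (p + 1) ^ (finrank K A + 1) - (p + 1) ^ finrank K A = (p + 1) ^ finrank K A * p := by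
    rw [pow_succ, mul_add, mul_one, Nat.add_sub_cancel]
  rw [h5, pow_add, ← h4] at h3
  have hpos : 0 < (p + 1) ^ finrank K A * p := Nat.mul_pos (by positivity) (by omega)
  apply Nat.eq_of_mul_eq_mul_right hpos
  nlinarith [h3]

lemma hyp_card (M : Submodule K V) :
    {U : Submodule K V | U ≤ M ∧ finrank K U + 1 = finrank K M}.ncard
      ≤ Fintype.card K ^ finrank K M := by
  have : Finite V := finV K
  have : Finite (M →ₗ[K] K) := Module.finite_of_finite K
  have hc : Nat.card (M →ₗ[K] K) = Fintype.card K ^ finrank K M := by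
    rw [Module.natCard_eq_pow_finrank (K := K), Nat.card_eq_fintype_card]
    congr 1
    exact Subspace.dual_finrank_eq
  rw [← hc, ← Set.ncard_univ]
  refine le_trans (Set.ncard_le_ncard (t := (fun φ : M →ₗ[K] K => (LinearMap.ker φ).map M.subtype) '' Set.univ) ?_
    (Set.toFinite _)) (Set.ncard_image_le (Set.toFinite _))
  rintro U ⟨h1, h2⟩
  have hne : U.comap M.subtype < ⊤ := by
    rw [lt_top_iff_ne_top]
    intro h
    have : M ≤ U := by rwa [Submodule.comap_subtype_eq_top] at h
    have := le_antisymm h1 this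
    subst this
    omega
  obtain ⟨φ, hφ, hle⟩ := Submodule.exists_le_ker_of_lt_top _ hne
  refine ⟨φ, trivial, ?_⟩
  have hle' : U ≤ (LinearMap.ker φ).map M.subtype := by
    intro x hx
    exact ⟨⟨x, h1 hx⟩, hle hx, rfl⟩
  symm
  apply Submodule.eq_of_le_of_finrank_le hle'
  have h3 : finrank K ↥((LinearMap.ker φ).map M.subtype) < finrank K M := by
    apply Submodule.finrank_lt_finrank_of_lt
    refine lt_of_le_of_ne (Submodule.map_subtype_le _ _) fun h => hφ ?_
    ext x
    have : (x : V) ∈ (LinearMap.ker φ).map M.subtype := by rw [h]; exact x.2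
    obtain ⟨y, hy, hxy⟩ := this
    have : y = x := Subtype.ext hxy
    subst this
    simpa using hy
  omega

/-- union bound -/
lemma union_bound {ι α : Type*} [Finite α] [Finite ι] (s : Set α) (I : Set ι) (A : ι → Set α) (n : ℕ) (c : ℝ)
    (hs : s ⊆ ⋃ i ∈ I, A i) (hI : I.ncard ≤ n) (hc0 : 0 ≤ c) (hc : ∀ i ∈ I, ((A i).ncard : ℝ) ≤ c) :
    (s.ncard : ℝ) ≤ n * c := by
  classical
  have := Fintype.ofFinite α
  have := Fintype.ofFinite ι
  have h1 : s.ncard ≤ ∑ i ∈ I.toFinset, (A i).ncard := by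
    calc s.ncard ≤ (⋃ i ∈ I, A i).ncard := Set.ncard_le_ncard hs (Set.toFinite _)
      _ = (I.toFinset.biUnion (fun i => (A i).toFinset)).card := by
        rw [Set.ncard_eq_toFinset_card']
        congr 1
        ext x; simp
      _ ≤ ∑ i ∈ I.toFinset, (A i).toFinset.card := Finset.card_biUnion_le
      _ = _ := by simp only [Set.ncard_eq_toFinset_card']
  calc (s.ncard : ℝ) ≤ ((∑ i ∈ I.toFinset, (A i).ncard : ℕ) : ℝ) := by exact_mod_cast h1
    _ = ∑ i ∈ I.toFinset, ((A i).ncard : ℝ) := by push_cast; rfl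
    _ ≤ ∑ i ∈ I.toFinset, c := Finset.sum_le_sum (by intro i hi; exact hc i (by simpa using hi))
    _ = I.ncard * c := by rw [Finset.sum_const, nsmul_eq_mul, Set.ncard_eq_toFinset_card']
    _ ≤ n * c := by gcongr

/-- Bonferroni -/
lemma bonferroni {ι α : Type*} [DecidableEq ι] [DecidableEq α] (A : ι → Finset α) (b c : ℝ)
    (hc0 : 0 ≤ c) (I : Finset ι)
    (hb : ∀ i ∈ I, b ≤ (A i).card) (hc : ∀ i ∈ I, ∀ j ∈ I, i ≠ j → (((A i) ∩ (A j)).card : ℝ) ≤ c) :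
    I.card * b ≤ (I.biUnion A).card + (I.card : ℝ) ^ 2 * c := by
  induction I using Finset.induction_on with
  | empty => simp
  | insert i s hi ih =>
    have ih' := ih (fun j hj => hb j (Finset.mem_insert_of_mem hj))
      (fun j hj k hk => hc j (Finset.mem_insert_of_mem hj) k (Finset.mem_insert_of_mem hk))
    rw [Finset.biUnion_insert, Finset.card_insert_of_notMem hi]
    have h1 := Finset.card_union_add_card_inter (A i) (s.biUnion A)
    have h2 : ((A i ∩ s.biUnion A).card : ℝ) ≤ s.card * c := by
      rw [Finset.inter_biUnion]
      calc (((s.biUnion fun j => A i ∩ A j).card : ℕ) : ℝ) ≤ ((∑ j ∈ s, (A i ∩ A j).card : ℕ) : ℝ) := by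
            exact_mod_cast Finset.card_biUnion_le
        _ = ∑ j ∈ s, ((A i ∩ A j).card : ℝ) := by push_cast; rfl
        _ ≤ ∑ j ∈ s, c := Finset.sum_le_sum (by
            intro j hj
            exact hc i (Finset.mem_insert_self _ _) j (Finset.mem_insert_of_mem hj)
              (by rintro rfl; exact hi hj))
        _ = _ := by rw [Finset.sum_const, nsmul_eq_mul]
    have h3 := hb i (Finset.mem_insert_self _ _)
    have h1' : ((A i ∪ s.biUnion A).card : ℝ) + (A i ∩ s.biUnion A).card = (A i).card + (s.biUnion A).card := by
      exact_mod_cast h1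
    push_cast
    have : (0 : ℝ) ≤ s.card * c := by positivity
    nlinarith

def NN (q ν m a : ℕ) : ℝ :=
  if a ≤ m then ∏ i ∈ Finset.Ico a m, ((q : ℝ) ^ (2 * ν - 2 * i) - 1) / ((q : ℝ) ^ (m - i) - 1) else 0

lemma pow_sub_pos {q n : ℕ} (hq : 2 ≤ q) (hn : 0 < n) : (0 : ℝ) < (q : ℝ) ^ n - 1 := by
  have h : (1 : ℝ) < q := by exact_mod_cast hq
  have := one_lt_pow₀ h hn.ne'
  linarith

lemma NN_succ {q ν m a : ℕ} (hq : 2 ≤ q) (ha : a < m) :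
    NN q ν m a * ((q : ℝ) ^ (m - a) - 1) = NN q ν m (a + 1) * ((q : ℝ) ^ (2 * ν - 2 * a) - 1) := by
  have := pow_sub_pos (n := m - a) hq (by omega)
  rw [NN, NN, if_pos ha.le, if_pos (by omega), Finset.prod_eq_prod_Ico_succ_bot ha]
  field_simp

lemma NN_pos {q ν m a : ℕ} (hq : 2 ≤ q) (ha : a ≤ m) (hm : m ≤ ν) : 0 < NN q ν m a := by
  rw [NN, if_pos ha]
  apply Finset.prod_pos
  intro i hi
  rw [Finset.mem_Ico] at hi
  exact div_pos (pow_sub_pos hq (by omega)) (pow_sub_pos hq (by omega))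

lemma NN_nonneg {q ν m : ℕ} (hq : 2 ≤ q) (hm : m ≤ ν) (a : ℕ) : 0 ≤ NN q ν m a := by
  by_cases ha : a ≤ m
  · exact (NN_pos hq ha hm).le
  · rw [NN, if_neg ha]

lemma NN_ratio {q ν m a e : ℕ} (hq : 2 ≤ q) (hm : m ≤ ν) (he : e + m + a ≤ 2 * ν) :
    (q : ℝ) ^ e * NN q ν m (a + 1) ≤ NN q ν m a := by
  by_cases ha : a < m
  · have h1 := NN_succ (ν := ν) hq ha
    have h2 := pow_sub_pos (n := m - a) hq (by omega)
    have h3 := NN_pos (a := a + 1) hq (by omega) hm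
    have hq1 : (1 : ℝ) ≤ q := by exact_mod_cast (by omega : 1 ≤ q)
    have h4 : (q : ℝ) ^ e * ((q : ℝ) ^ (m - a) - 1) ≤ (q : ℝ) ^ (2 * ν - 2 * a) - 1 := by
      have h5 : (q : ℝ) ^ e * (q : ℝ) ^ (m - a) ≤ (q : ℝ) ^ (2 * ν - 2 * a) := by
        rw [← pow_add]; exact pow_le_pow_right₀ hq1 (by omega)
      have h6 := one_le_pow₀ (n := e) hq1
      linarith
    refine le_of_mul_le_mul_right ?_ h2
    rw [h1]
    calc _ = NN q ν m (a + 1) * ((q : ℝ) ^ e * ((q : ℝ) ^ (m - a) - 1)) := by ring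
      _ ≤ _ := by gcongr
  · have : NN q ν m (a + 1) = 0 := by rw [NN, if_neg (by omega)]
    rw [this, mul_zero]
    exact NN_nonneg hq hm a

def perp (f : V →ₗ[K] V →ₗ[K] K) (A : Submodule K V) : Submodule K V :=
  LinearMap.BilinForm.orthogonal f A

variable {f : V →ₗ[K] V →ₗ[K] K}

lemma mem_perp {A : Submodule K V} {v : V} : v ∈ perp f A ↔ ∀ n ∈ A, f n v = 0 :=
  LinearMap.BilinForm.mem_orthogonal_iff

lemma f_swap (halt : ∀ v, f v v = 0) (x y : V) : f x y = - f y x := by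
  have h := halt (x + y)
  simp only [map_add, LinearMap.add_apply, halt, zero_add, add_zero] at h
  rw [eq_neg_iff_add_eq_zero, add_comm]; exact h

lemma perp_finrank (halt : ∀ v, f v v = 0) (hnd : ∀ v, (∀ w, f v w = 0) → v = 0)
    (A : Submodule K V) : finrank K (perp f A) = finrank K V - finrank K A := by
  apply LinearMap.BilinForm.finrank_orthogonal
  refine ⟨hnd, fun y hy => hnd y fun w => ?_⟩
  rw [f_swap halt, hy, neg_zero]

lemma le_perp {A : Submodule K V} (hA : TotallyIsotropic f A) : A ≤ perp f A := by
  intro v hv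
  rw [mem_perp]
  intro n hn
  exact hA n hn v hv

lemma iso_mono {A B : Submodule K V} (h : A ≤ B) (hB : TotallyIsotropic f B) :
    TotallyIsotropic f A := fun x hx y hy => hB x (h hx) y (h hy)

lemma iso_sup {A B : Submodule K V} (halt : ∀ v, f v v = 0) (hA : TotallyIsotropic f A)
    (hB : TotallyIsotropic f B) (h : B ≤ perp f A) : TotallyIsotropic f (A ⊔ B) := by
  intro x hx y hy
  obtain ⟨x1, hx1, x2, hx2, rfl⟩ := Submodule.mem_sup.1 hx
  obtain ⟨y1, hy1, y2, hy2, rfl⟩ := Submodule.mem_sup.1 hy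
  simp only [map_add, LinearMap.add_apply]
  rw [hA x1 hx1 y1 hy1, hB x2 hx2 y2 hy2, mem_perp.1 (h hy2) x1 hx1, f_swap halt x2 y1,
    mem_perp.1 (h hx2) y1 hy1]
  simp

lemma iso_span (halt : ∀ v, f v v = 0) (v : V) : TotallyIsotropic f (Submodule.span K {v}) := by
  intro x hx y hy
  obtain ⟨a, rfl⟩ := Submodule.mem_span_singleton.1 hx
  obtain ⟨b, rfl⟩ := Submodule.mem_span_singleton.1 hy
  simp [halt]

lemma iso_ovr (halt : ∀ v, f v v = 0) {A B : Submodule K V} (hA : TotallyIsotropic f A)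
    (hB : B ∈ ovr A (perp f A)) : TotallyIsotropic f B := by
  obtain ⟨h1, h2, h3⟩ := hB
  have : ∃ v ∈ B, v ∉ A := by
    by_contra hcon
    push Not at hcon
    have : A = B := le_antisymm h1 hcon
    subst this; omega
  obtain ⟨v, hv, hvA⟩ := this
  have hs : Submodule.span K {v} ≤ B := by rwa [Submodule.span_singleton_le_iff_mem]
  have : A ⊔ Submodule.span K {v} = B := by
    apply Submodule.eq_of_le_of_finrank_le (sup_le h1 hs)
    rw [finrank_sup_span hvA, h3]
  rw [← this]
  exact iso_sup halt hA (iso_span halt v) (hs.trans h2)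

open Classical in
lemma card_C3 (halt : ∀ v, f v v = 0) (hnd : ∀ v, (∀ w, f v w = 0) → v = 0) {ν : ℕ}
    (hV : finrank K V = 2 * ν) {m : ℕ} (hm : m ≤ ν) (j : ℕ) (A : Submodule K V)
    (hA : TotallyIsotropic f A) (hj : finrank K A + j = m) :
    ((C3 f A m).ncard : ℝ) = NN (Fintype.card K) ν m (finrank K A) := by
  have : Finite (Submodule K V) := finS
  have := Fintype.ofFinite (Submodule K V)
  induction j generalizing A with
  | zero =>
    have : C3 f A m = {A} := by
      ext F
      simp only [C3, polar, Set.mem_ofPred_eq, Set.mem_singleton_iff]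
      constructor
      · rintro ⟨⟨h1, h2⟩, h3⟩
        exact (Submodule.eq_of_le_of_finrank_le h3 (by omega)).symm
      · rintro rfl
        exact ⟨⟨hA, by omega⟩, le_rfl⟩
    rw [this, NN, if_pos (by omega), show finrank K A = m by omega]
    simp
  | succ j ih =>
    have hq : 2 ≤ Fintype.card K := two_le
    have key := Finset.sum_card_bipartiteAbove_eq_sum_card_bipartiteBelow
      (fun (F B : Submodule K V) => B ≤ F) (s := (C3 f A m).toFinset)
      (t := (ovr A (perp f A)).toFinset)
    have e1 : ∀ F ∈ (C3 f A m).toFinset,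
        (Finset.bipartiteAbove (fun (F B : Submodule K V) => B ≤ F)
          (ovr A (perp f A)).toFinset F).card = gs (Fintype.card K) (m - finrank K A) := by
      intro F hF
      rw [Set.mem_toFinset] at hF
      obtain ⟨⟨h1, h2⟩, h3⟩ := hF
      rw [← over_card h3 (m - finrank K A) (by omega), Set.ncard_eq_toFinset_card']
      congr 1
      ext B
      simp only [Finset.mem_bipartiteAbove, Set.mem_toFinset]
      constructor
      · rintro ⟨⟨a, b, c⟩, d⟩
        exact ⟨a, d, c⟩
      · rintro ⟨a, b, c⟩
        refine ⟨⟨a, ?_, c⟩, b⟩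
        intro x hx
        rw [mem_perp]
        intro n hn
        exact h1 n (h3 hn) x (b hx)
    have e2 : ∀ B ∈ (ovr A (perp f A)).toFinset,
        ((Finset.bipartiteBelow (fun (F B : Submodule K V) => B ≤ F)
          (C3 f A m).toFinset B).card : ℝ) = NN (Fintype.card K) ν m (finrank K A + 1) := by
      intro B hB
      rw [Set.mem_toFinset] at hB
      have hiso := iso_ovr halt hA hB
      rw [← hB.2.2, ← ih B hiso (by rw [hB.2.2]; omega), Set.ncard_eq_toFinset_card']
      congr 2
      ext F
      simp only [Finset.mem_bipartiteBelow, Set.mem_toFinset]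
      constructor
      · rintro ⟨⟨a, b⟩, d⟩
        exact ⟨a, d⟩
      · rintro ⟨a, b⟩
        exact ⟨⟨a, hB.1.trans b⟩, b⟩
    rw [Finset.sum_congr rfl e1, Finset.sum_const, smul_eq_mul] at key
    have key' : (((C3 f A m).toFinset.card * gs (Fintype.card K) (m - finrank K A) : ℕ) : ℝ)
        = (ovr A (perp f A)).toFinset.card * NN (Fintype.card K) ν m (finrank K A + 1) := by
      rw [key]; push_cast
      rw [Finset.sum_congr rfl e2, Finset.sum_const, nsmul_eq_mul]
    have hle := Submodule.finrank_mono (le_perp hA)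
    have hpf := perp_finrank halt hnd A
    rw [← Set.ncard_eq_toFinset_card', ← Set.ncard_eq_toFinset_card',
      over_card (le_perp hA) (2 * ν - 2 * finrank K A) (by omega)] at key'
    have h5 := NN_succ (ν := ν) hq (show finrank K A < m by omega)
    have hgs : ∀ d, (gs (Fintype.card K) d : ℝ) * ((Fintype.card K : ℝ) - 1)
        = (Fintype.card K : ℝ) ^ d - 1 := by
      intro d
      obtain ⟨p, hp⟩ : ∃ p, Fintype.card K = p + 1 := ⟨Fintype.card K - 1, by omega⟩
      rw [hp]
      have := gs_mul p d
      have : (gs (p + 1) d : ℝ) * p + 1 = ((p : ℝ) + 1) ^ d := by exact_mod_cast this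
      push_cast
      linarith
    push_cast at key'
    refine mul_right_cancel₀ (pow_sub_pos (n := m - finrank K A) hq (by omega)).ne' ?_
    rw [h5, ← hgs, ← hgs, ← mul_assoc, key']
    ring

lemma card_C3_le (halt : ∀ v, f v v = 0) (hnd : ∀ v, (∀ w, f v w = 0) → v = 0) {ν : ℕ}
    (hV : finrank K V = 2 * ν) {m : ℕ} (hm : m ≤ ν) (A : Submodule K V) (a : ℕ)
    (ha : finrank K A = a) :
    ((C3 f A m).ncard : ℝ) ≤ NN (Fintype.card K) ν m a := by
  subst ha
  by_cases h : TotallyIsotropic f A ∧ finrank K A ≤ m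
  · exact (card_C3 halt hnd hV hm (m - finrank K A) A h.1 (by omega)).le
  · have : C3 f A m = ∅ := by
      ext F
      simp only [Set.mem_empty_iff_false, iff_false]
      rintro ⟨⟨h1, h2⟩, h3⟩
      exact h ⟨iso_mono h3 h1, h2 ▸ Submodule.finrank_mono h3⟩
    rw [this]
    simpa using NN_nonneg two_le hm _

/-- lower bound for C1 -/
lemma C1_lower (halt : ∀ v, f v v = 0) (hnd : ∀ v, (∀ w, f v w = 0) → v = 0) {ν : ℕ}
    (hV : finrank K V = 2 * ν) {m t a : ℕ} (hm : m ≤ ν) (htm : t + 1 ≤ m) (M T : Submodule K V)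
    (hM : TotallyIsotropic f M) (hT : T ≤ M) (ht : finrank K T = t) (hMa : finrank K M = t + a) :
    (gs (Fintype.card K) a : ℝ) * NN (Fintype.card K) ν m (t + 1)
      ≤ (C1 f M T m t).ncard + (gs (Fintype.card K) a : ℝ) ^ 2 * NN (Fintype.card K) ν m (t + 2) := by
  classical
  have : Finite (Submodule K V) := finS
  have := Fintype.ofFinite (Submodule K V)
  have hc := over_card hT a (by omega)
  rw [Set.ncard_eq_toFinset_card'] at hc
  have hb := bonferroni (fun H : Submodule K V => (C3 f H m).toFinset)
    (NN (Fintype.card K) ν m (t + 1)) (NN (Fintype.card K) ν m (t + 2)) (NN_nonneg two_le hm _)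
    (ovr T M).toFinset (by
      intro H hH
      rw [Set.mem_toFinset] at hH
      obtain ⟨h1, h2, h3⟩ := hH
      rw [← Set.ncard_eq_toFinset_card', card_C3 halt hnd hV hm (m - (t + 1)) H (iso_mono h2 hM) (by omega),
        h3, ht]) (by
      intro H hH H' hH' hne
      rw [Set.mem_toFinset] at hH hH'
      obtain ⟨h1, h2, h3⟩ := hH
      obtain ⟨h1', h2', h3'⟩ := hH'
      have hinf : H ⊓ H' = T := by
        symm
        apply Submodule.eq_of_le_of_finrank_le (le_inf h1 h1')
        by_contra hcon
        have h4 := Submodule.finrank_mono (inf_le_left : H ⊓ H' ≤ H)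
        have h5 : H ⊓ H' = H := Submodule.eq_of_le_of_finrank_le inf_le_left (by omega)
        have h6 : H ⊓ H' = H' := Submodule.eq_of_le_of_finrank_le inf_le_right (by omega)
        exact hne (h5.symm.trans h6)
      have hd := Submodule.finrank_sup_add_finrank_inf_eq H H'
      rw [hinf] at hd
      refine le_trans ?_ (card_C3_le halt hnd hV hm (H ⊔ H') (t + 2) (by omega))
      rw [Set.ncard_eq_toFinset_card']
      gcongr
      intro F hF
      simp only [Finset.mem_inter, Set.mem_toFinset] at hF ⊢
      exact ⟨hF.1.1, sup_le hF.1.2 hF.2.2⟩)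
  rw [hc] at hb
  refine hb.trans ?_
  gcongr
  rw [Set.ncard_eq_toFinset_card']
  apply Finset.card_le_card
  intro F hF
  simp only [Finset.mem_biUnion, Set.mem_toFinset] at hF ⊢
  obtain ⟨H, ⟨h1, h2, h3⟩, h4, h5⟩ := hF
  refine ⟨h4, h1.trans h5, ?_⟩
  have := Submodule.finrank_mono (le_inf h5 h2)
  omega

lemma exists_avoid (halt : ∀ v, f v v = 0) (hnd : ∀ v, (∀ w, f v w = 0) → v = 0) {ν : ℕ}
    (hV : finrank K V = 2 * ν) (T S : Submodule K V) (hT : TotallyIsotropic f T) (j : ℕ)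
    (hj : 2 * (finrank K T + j) + finrank K S ≤ 2 * ν) :
    ∃ F ∈ polar f (finrank K T + j), T ≤ F ∧ F ⊓ S ≤ T := by
  induction j with
  | zero => exact ⟨T, ⟨hT, rfl⟩, le_rfl, inf_le_left⟩
  | succ j ih =>
    obtain ⟨F, ⟨hF, hFd⟩, hTF, hFS⟩ := ih (by omega)
    have hnle : ¬ perp f F ≤ F ⊔ S := by
      intro h
      have h1 := Submodule.finrank_mono h
      have h2 := Submodule.finrank_sup_add_finrank_inf_eq F S
      have h3 := perp_finrank halt hnd F
      omega
    obtain ⟨v, hv, hvn⟩ := Set.not_subset.1 hnle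
    have hvF : v ∉ F := fun h => hvn (le_sup_left (b := S) h)
    refine ⟨F ⊔ Submodule.span K {v}, ⟨iso_sup halt hF (iso_span halt v) ?_, ?_⟩,
      hTF.trans le_sup_left, ?_⟩
    · rw [Submodule.span_singleton_le_iff_mem]; exact hv
    · rw [finrank_sup_span hvF, hFd]; ring
    · rintro x ⟨hx1, hx2⟩
      obtain ⟨y, hy, z, hz, rfl⟩ := Submodule.mem_sup.1 hx1
      obtain ⟨c, rfl⟩ := Submodule.mem_span_singleton.1 hz
      by_cases hc : c = 0
      · subst hc
        refine hFS ⟨?_, hx2⟩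
        simpa using hy
      · exfalso
        apply hvn
        have h1 : c • v ∈ F ⊔ S := by
          have : c • v = (y + c • v) - y := by abel
          rw [this]
          exact Submodule.sub_mem _ (le_sup_right (a := F) hx2) (le_sup_left (b := S) hy)
        have := Submodule.smul_mem _ c⁻¹ h1
        rwa [smul_smul, inv_mul_cancel₀ hc, one_smul] at this

lemma step {T F₁ F₂ : Submodule K V} (hT : T ≤ F₁)
    (hc : finrank K T ≤ finrank K ↥(F₁ ⊓ F₂)) (hn : ¬ T ≤ F₂) :
    ∃ H ∈ ovr T (T ⊔ F₂), H ≤ F₁ := by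
  have : ¬ F₁ ⊓ F₂ ≤ T := by
    intro h
    have := Submodule.eq_of_le_of_finrank_le h hc
    exact hn (this ▸ inf_le_right)
  obtain ⟨v, hv, hvT⟩ := Set.not_subset.1 this
  refine ⟨T ⊔ Submodule.span K {v}, ⟨le_sup_left, sup_le_sup_left ?_ _, finrank_sup_span hvT⟩,
    sup_le hT ?_⟩
  · rw [Submodule.span_singleton_le_iff_mem]; exact hv.2
  · rw [Submodule.span_singleton_le_iff_mem]; exact hv.1

lemma F1_bound (halt : ∀ v, f v v = 0) (hnd : ∀ v, (∀ w, f v w = 0) → v = 0) {ν : ℕ}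
    (hV : finrank K V = 2 * ν) {m t a k : ℕ} (hm : m ≤ ν)
    {ℱ₁ ℱ₂ : Set (Submodule K V)} (T M F₀ : Submodule K V)
    (h1 : ℱ₁ ⊆ polar f m) (hTd : finrank K T = t)
    (hcross : ∀ F₁ ∈ ℱ₁, ∀ F₂ ∈ ℱ₂, t ≤ finrank K ↥(F₁ ⊓ F₂))
    (hT : ∀ F₁ ∈ ℱ₁, T ≤ F₁)
    (ha : ∀ F₂ ∈ ℱ₂, ¬ T ≤ F₂ → finrank K ↥(T ⊔ F₂) = t + a)
    (hX : ∀ F₂ ∈ ℱ₂, t ≤ finrank K ↥(T ⊓ F₂) + 1)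
    (hF₀ : F₀ ∈ ℱ₂) (hF₀T : ¬ T ≤ F₀) (hTM : T ≤ M) (hMd : finrank K M = t + k)
    (hcov : ∀ H, T ≤ H → finrank K H = t + 1 → IsTCover f t ℱ₂ H → H ≤ M) :
    (ℱ₁.ncard : ℝ) ≤ gs (Fintype.card K) k * NN (Fintype.card K) ν m (t + 1)
      + (gs (Fintype.card K) a : ℝ) ^ 2 * NN (Fintype.card K) ν m (t + 2) := by
  have : Finite (Submodule K V) := finS
  have hn1 := NN_nonneg (q := Fintype.card K) two_le hm (t + 1)
  have hn2 := NN_nonneg (q := Fintype.card K) two_le hm (t + 2)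
  set P1 := {F ∈ ℱ₁ | ∃ H ∈ ovr T M, H ≤ F} with hP1
  set P2 := {F ∈ ℱ₁ | ¬ ∃ H ∈ ovr T M, H ≤ F} with hP2
  have hun : ℱ₁ ⊆ P1 ∪ P2 := by
    intro F hF
    by_cases h : ∃ H ∈ ovr T M, H ≤ F
    · exact Or.inl ⟨hF, h⟩
    · exact Or.inr ⟨hF, h⟩
  have hle : ℱ₁.ncard ≤ P1.ncard + P2.ncard :=
    (Set.ncard_le_ncard hun (Set.toFinite _)).trans (Set.ncard_union_le _ _)
  have b1 : (P1.ncard : ℝ) ≤ gs (Fintype.card K) k * NN (Fintype.card K) ν m (t + 1) := by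
    refine union_bound P1 (ovr T M) (fun H => C3 f H m) _ _ ?_
      (over_card hTM k (by omega)).le hn1 ?_
    · rintro F ⟨hF, H, hH, hHF⟩
      simp only [Set.mem_iUnion]
      exact ⟨H, hH, h1 hF, hHF⟩
    · intro H hH
      exact card_C3_le halt hnd hV hm H _ (by rw [hH.2.2, hTd])
  have b2 : (P2.ncard : ℝ) ≤ gs (Fintype.card K) a *
      (gs (Fintype.card K) a * NN (Fintype.card K) ν m (t + 2)) := by
    refine union_bound P2 (ovr T (T ⊔ F₀)) (fun H => {F ∈ P2 | H ≤ F}) _ _ ?_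
      (over_card le_sup_left a (by rw [ha F₀ hF₀ hF₀T, hTd])).le (by positivity) ?_
    · rintro F hF
      obtain ⟨H, hH, hHF⟩ := step (hT F hF.1) (by rw [hTd]; exact hcross F hF.1 F₀ hF₀) hF₀T
      simp only [Set.mem_iUnion]
      exact ⟨H, hH, hF, hHF⟩
    · intro H hH
      by_cases hemp : {F ∈ P2 | H ≤ F} = ∅
      · rw [hemp]; simp only [Set.ncard_empty, Nat.cast_zero]; positivity
      obtain ⟨F, hF, hHF⟩ := Set.nonempty_iff_ne_empty.2 hemp
      have hHiso : TotallyIsotropic f H := iso_mono hHF (h1 hF.1).1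
      have hnc : ¬ IsTCover f t ℱ₂ H := by
        intro hc
        exact hF.2 ⟨H, ⟨hH.1, hcov H hH.1 (by rw [hH.2.2, hTd]) hc, hH.2.2⟩, hHF⟩
      have : ∃ F₂ ∈ ℱ₂, finrank K ↥(H ⊓ F₂) < t := by
        by_contra hcon
        push Not at hcon
        exact hnc ⟨hHiso, hcon⟩
      obtain ⟨F₂, hF₂, hlt⟩ := this
      have hTF₂ : ¬ T ≤ F₂ := by
        intro h
        have := Submodule.finrank_mono (le_inf hH.1 h)
        omega
      have hHn : ¬ H ≤ T ⊔ F₂ := by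
        intro h
        have e : T ⊔ (F₂ ⊓ H) = H := by
          rw [← sup_inf_assoc_of_le F₂ hH.1]; exact inf_eq_right.2 h
        have d1 := Submodule.finrank_sup_add_finrank_inf_eq T (F₂ ⊓ H)
        rw [e, hH.2.2, inf_comm F₂ H, ← inf_assoc, inf_eq_left.2 hH.1] at d1
        have d2 := hX F₂ hF₂
        omega
      refine union_bound _ (ovr T (T ⊔ F₂)) (fun H' => C3 f (H ⊔ H') m) _ _ ?_
        (over_card le_sup_left a (by rw [ha F₂ hF₂ hTF₂, hTd])).le hn2 ?_
      · rintro F' ⟨hF', hHF'⟩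
        obtain ⟨H', hH', hHF''⟩ := step (hT F' hF'.1) (by rw [hTd]; exact hcross F' hF'.1 F₂ hF₂) hTF₂
        simp only [Set.mem_iUnion]
        exact ⟨H', hH', h1 hF'.1, sup_le hHF' hHF''⟩
      · intro H' hH'
        apply card_C3_le halt hnd hV hm
        have hinf : H ⊓ H' = T := by
          symm
          apply Submodule.eq_of_le_of_finrank_le (le_inf hH.1 hH'.1)
          by_contra hcon
          have h4 := Submodule.finrank_mono (inf_le_left : H ⊓ H' ≤ H)
          have h5 : H ⊓ H' = H := by
            apply Submodule.eq_of_le_of_finrank_le inf_le_left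
            rw [hH.2.2]; omega
          exact hHn (h5 ▸ inf_le_right.trans hH'.2.1)
        have hd := Submodule.finrank_sup_add_finrank_inf_eq H H'
        rw [hinf, hH.2.2, hH'.2.2] at hd
        omega
  have hle' : (ℱ₁.ncard : ℝ) ≤ P1.ncard + P2.ncard := by exact_mod_cast hle
  nlinarith

lemma F2_bound_A (halt : ∀ v, f v v = 0) (hnd : ∀ v, (∀ w, f v w = 0) → v = 0) {ν : ℕ}
    (hV : finrank K V = 2 * ν) {m t l : ℕ} (hm : m ≤ ν)
    {ℱ₂ : Set (Submodule K V)} (T M : Submodule K V)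
    (h2 : ℱ₂ ⊆ polar f m) (hTd : finrank K T = t) (hMd : finrank K M = l + 1)
    (hh : ∀ F₂ ∈ ℱ₂, ¬ T ≤ F₂ → finrank K ↥(M ⊓ F₂) = l) :
    (ℱ₂.ncard : ℝ) ≤ NN (Fintype.card K) ν m t
      + (Fintype.card K : ℝ) ^ (l + 1) * NN (Fintype.card K) ν m l := by
  have : Finite (Submodule K V) := finS
  have hn1 := NN_nonneg (q := Fintype.card K) two_le hm l
  have hun : ℱ₂ ⊆ C3 f T m ∪ {F ∈ ℱ₂ | ¬ T ≤ F} := by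
    intro F hF
    by_cases h : T ≤ F
    · exact Or.inl ⟨h2 hF, h⟩
    · exact Or.inr ⟨hF, h⟩
  have hle : ℱ₂.ncard ≤ (C3 f T m).ncard + {F ∈ ℱ₂ | ¬ T ≤ F}.ncard :=
    (Set.ncard_le_ncard hun (Set.toFinite _)).trans (Set.ncard_union_le _ _)
  have b1 := card_C3_le halt hnd hV hm T t hTd
  have b2 : ({F ∈ ℱ₂ | ¬ T ≤ F}.ncard : ℝ) ≤ (Fintype.card K ^ finrank K M : ℕ) *
      NN (Fintype.card K) ν m l := by
    refine union_bound _ {U : Submodule K V | U ≤ M ∧ finrank K U + 1 = finrank K M}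
      (fun H => C3 f H m) _ _ ?_ (hyp_card M) hn1 ?_
    · rintro F ⟨hF, hTF⟩
      simp only [Set.mem_iUnion]
      exact ⟨M ⊓ F, ⟨inf_le_left, by rw [hh F hF hTF, hMd]⟩, h2 hF, inf_le_right⟩
    · intro H hH
      exact card_C3_le halt hnd hV hm H _ (by have := hH.2; omega)
  have hle' : (ℱ₂.ncard : ℝ) ≤ (C3 f T m).ncard + {F ∈ ℱ₂ | ¬ T ≤ F}.ncard := by
    exact_mod_cast hle
  rw [hMd] at b2
  push_cast at b2
  linarith

lemma F2_bound_B (halt : ∀ v, f v v = 0) (hnd : ∀ v, (∀ w, f v w = 0) → v = 0) {ν : ℕ}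
    (hV : finrank K V = 2 * ν) {m t e : ℕ} (hm : m ≤ ν)
    {ℱ₂ : Set (Submodule K V)} (T M F₁ : Submodule K V)
    (h2 : ℱ₂ ⊆ polar f m) (hTd : finrank K T = t) (hMd : finrank K M = t + 1)
    (hh : ∀ F₂ ∈ ℱ₂, ¬ T ≤ F₂ → finrank K ↥(M ⊓ F₂) = t)
    (hF₁M : F₁ ⊓ M = T) (he : finrank K F₁ = t + e)
    (hcross : ∀ F₂ ∈ ℱ₂, t ≤ finrank K ↥(F₁ ⊓ F₂)) :
    (ℱ₂.ncard : ℝ) ≤ NN (Fintype.card K) ν m t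
      + (Fintype.card K : ℝ) ^ (t + 1) *
        (gs (Fintype.card K) (e + 1) * NN (Fintype.card K) ν m (t + 1)) := by
  have : Finite (Submodule K V) := finS
  have hn1 := NN_nonneg (q := Fintype.card K) two_le hm (t + 1)
  have hTF₁ : T ≤ F₁ := hF₁M ▸ inf_le_left
  have hTM : T ≤ M := hF₁M ▸ inf_le_right
  have hun : ℱ₂ ⊆ C3 f T m ∪ {F ∈ ℱ₂ | ¬ T ≤ F} := by
    intro F hF
    by_cases h : T ≤ F
    · exact Or.inl ⟨h2 hF, h⟩
    · exact Or.inr ⟨hF, h⟩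
  have hle : ℱ₂.ncard ≤ (C3 f T m).ncard + {F ∈ ℱ₂ | ¬ T ≤ F}.ncard :=
    (Set.ncard_le_ncard hun (Set.toFinite _)).trans (Set.ncard_union_le _ _)
  have b1 := card_C3_le halt hnd hV hm T t hTd
  have b2 : ({F ∈ ℱ₂ | ¬ T ≤ F}.ncard : ℝ) ≤ (Fintype.card K ^ finrank K M : ℕ) *
      (gs (Fintype.card K) (e + 1) * NN (Fintype.card K) ν m (t + 1)) := by
    refine union_bound _ {U : Submodule K V | U ≤ M ∧ finrank K U + 1 = finrank K M}
      (fun U => {F ∈ ℱ₂ | ¬ T ≤ F ∧ U ≤ F}) _ _ ?_ (hyp_card M) (by positivity) ?_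
    · rintro F ⟨hF, hTF⟩
      simp only [Set.mem_iUnion]
      exact ⟨M ⊓ F, ⟨inf_le_left, by rw [hh F hF hTF, hMd]⟩, hF, hTF, inf_le_right⟩
    · rintro U ⟨hUM, hUd⟩
      by_cases hTU : T ≤ U
      · have : {F ∈ ℱ₂ | ¬ T ≤ F ∧ U ≤ F} = ∅ := by
          ext F
          simp only [Set.mem_empty_iff_false, iff_false]
          rintro ⟨_, h3, h4⟩
          exact h3 (hTU.trans h4)
        rw [this]; simp only [Set.ncard_empty, Nat.cast_zero]; positivity
      have hd1 := Submodule.finrank_sup_add_finrank_inf_eq T U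
      have hd2 := Submodule.finrank_mono (sup_le hTM hUM)
      have hd3 : finrank K ↥(T ⊓ U) < t := by
        rw [← hTd]
        exact Submodule.finrank_lt_finrank_of_lt (inf_lt_left.2 hTU)
      refine union_bound _ (ovr (T ⊓ U) F₁) (fun B => C3 f (U ⊔ B) m) _ _ ?_
        (over_card (inf_le_left.trans hTF₁) (e + 1) (by omega)).le hn1 ?_
      · rintro F ⟨hF, hTF, hUF⟩
        have : ¬ F₁ ⊓ F ≤ T := by
          intro h
          have := Submodule.eq_of_le_of_finrank_le h (by rw [hTd]; exact hcross F hF)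
          exact hTF (this ▸ inf_le_right)
        obtain ⟨v, hv, hvT⟩ := Set.not_subset.1 this
        have hvTU : v ∉ T ⊓ U := fun h => hvT h.1
        simp only [Set.mem_iUnion]
        refine ⟨T ⊓ U ⊔ Submodule.span K {v}, ⟨le_sup_left, sup_le (inf_le_left.trans hTF₁) ?_,
          finrank_sup_span hvTU⟩, h2 hF, sup_le hUF (sup_le (inf_le_right.trans hUF) ?_)⟩
        · rw [Submodule.span_singleton_le_iff_mem]; exact hv.1
        · rw [Submodule.span_singleton_le_iff_mem]; exact hv.2
      · intro B hB
        apply card_C3_le halt hnd hV hm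
        have hinf : U ⊓ B = T ⊓ U := by
          apply le_antisymm
          · refine le_inf ?_ inf_le_left
            rw [← hF₁M]
            exact le_inf (inf_le_right.trans hB.2.1) (inf_le_left.trans hUM)
          · exact le_inf inf_le_right hB.1
        have hd := Submodule.finrank_sup_add_finrank_inf_eq U B
        rw [hinf, hB.2.2] at hd
        omega
  have hle' : (ℱ₂.ncard : ℝ) ≤ (C3 f T m).ncard + {F ∈ ℱ₂ | ¬ T ≤ F}.ncard := by
    exact_mod_cast hle
  rw [hMd] at b2
  push_cast at b2
  linarith

lemma numeric {s u g gk w x1 x2 y1 y2 y P P2 Q : ℝ} (hP : 0 < P) (hQ : 0 < Q) (hP2 : 0 ≤ P2)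
    (hu : 2 ≤ u) (hs0 : 0 ≤ s) (hs : s + 1 ≤ u) (hw : 2 * u ≤ w) (hg : g = s + u) (hg0 : g ≤ w)
    (hgk : gk ≤ s) (hPP : 2 * w ^ 2 * P2 ≤ P)
    (hx1 : x1 ≤ gk * P + g ^ 2 * P2) (hx2 : x2 ≤ Q + y) (hx20 : 0 ≤ x2) (hy : w * y ≤ Q)
    (hy1 : g * P ≤ y1 + g ^ 2 * P2) (hy2 : Q ≤ y2) : x1 * x2 < y1 * y2 := by
  have h1 : g ^ 2 * P2 ≤ P / 2 := by
    have : g ^ 2 ≤ w ^ 2 := by apply pow_le_pow_left₀ <;> linarith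
    nlinarith
  have h2 : x1 ≤ (s + 1 / 2) * P := by nlinarith
  have h3 : (s + u - 1 / 2) * P ≤ y1 := by subst hg; nlinarith
  have hw0 : 0 < w := by linarith
  have h4 : w * x2 ≤ (w + 1) * Q := by nlinarith
  have h5 : x1 * x2 * w ≤ (s + 1 / 2) * P * ((w + 1) * Q) := by
    calc x1 * x2 * w = x1 * (w * x2) := by ring
      _ ≤ ((s + 1 / 2) * P) * (w * x2) := by gcongr
      _ ≤ _ := by gcongr
  have h6 : (s + u - 1 / 2) * P * Q ≤ y1 * y2 := by
    have : 0 ≤ (s + u - 1 / 2) * P := mul_nonneg (by linarith) hP.le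
    apply mul_le_mul h3 hy2 hQ.le (this.trans h3)
  have h7 : (s + 1 / 2) * (w + 1) < (s + u - 1 / 2) * w := by nlinarith
  have h8 : x1 * x2 * w < y1 * y2 * w := by
    calc _ ≤ _ := h5
      _ = ((s + 1 / 2) * (w + 1)) * (P * Q) := by ring
      _ < ((s + u - 1 / 2) * w) * (P * Q) := by
        apply mul_lt_mul_of_pos_right h7; positivity
      _ = (s + u - 1 / 2) * P * Q * w := by ring
      _ ≤ _ := by gcongr
  exact lt_of_mul_lt_mul_right h8 hw0.le

lemma NN_chain {q ν m a : ℕ} (hq : 2 ≤ q) (hm : m ≤ ν) (j : ℕ) (h : a + j ≤ m) (hlt : m < ν) :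
    (q : ℝ) ^ j * NN q ν m (a + j) ≤ NN q ν m a := by
  induction j with
  | zero => simp
  | succ j ih =>
    have h1 := ih (by omega)
    have h2 := NN_ratio (q := q) (ν := ν) (m := m) (a := a + j) (e := 1) hq hm (by omega)
    calc (q : ℝ) ^ (j + 1) * NN q ν m (a + (j + 1)) = (q : ℝ) ^ j * ((q : ℝ) ^ 1 * NN q ν m (a + j + 1)) := by
          rw [pow_succ, pow_one]; ring_nf
      _ ≤ (q : ℝ) ^ j * NN q ν m (a + j) := by gcongr
      _ ≤ _ := h1

end Aux

theorem stmt_19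
    (q ν m₁ m₂ t : ℕ) (hq : IsPrimePow q)
    {K : Type} [Field K] [Fintype K] (hK : Fintype.card K = q)
    (f : (Fin (2 * ν) → K) →ₗ[K] (Fin (2 * ν) → K) →ₗ[K] K)
    (halt : ∀ v, f v v = 0)
    (hnd : ∀ v, (∀ w, f v w = 0) → v = 0)
    (ht : 0 < t) (hm₁ : t + 1 ≤ m₁) (hm₂ : t + 1 ≤ m₂) (hm₁ν : m₁ < ν) (hm₂ν : m₂ < ν)
    (hdim : m₁ + 2 * m₂ + 3 ≤ 2 * ν)
    (ℱ₁ ℱ₂ : Set (Submodule K (Fin (2 * ν) → K)))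
    (h1ne : ℱ₁.Nonempty) (h2ne : ℱ₂.Nonempty)
    (h1 : ℱ₁ ⊆ polar f m₁) (h2 : ℱ₂ ⊆ polar f m₂)
    (hcross : ∀ F₁ ∈ ℱ₁, ∀ F₂ ∈ ℱ₂, t ≤ finrank K ↥(F₁ ⊓ F₂))
    (hnt : ¬ ∃ T ∈ polar f t, (∀ F ∈ ℱ₁, T ≤ F) ∧ (∀ F ∈ ℱ₂, T ≤ F))
    (hmax : ∀ 𝒢₁ 𝒢₂ : Set (Submodule K (Fin (2 * ν) → K)),
      𝒢₁ ⊆ polar f m₁ → 𝒢₂ ⊆ polar f m₂ →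
      (∀ G₁ ∈ 𝒢₁, ∀ G₂ ∈ 𝒢₂, t ≤ finrank K ↥(G₁ ⊓ G₂)) →
      ℱ₁ ⊆ 𝒢₁ → ℱ₂ ⊆ 𝒢₂ → 𝒢₁ = ℱ₁ ∧ 𝒢₂ = ℱ₂)
    (htau₁ : tauCover f t ℱ₁ = t) (htau₂ : tauCover f t ℱ₂ = t + 1) :
    (∃ M ∈ polar f (m₂ + 1), ∃ T : Submodule K (Fin (2 * ν) → K),
        T ≤ M ∧ finrank K T = t ∧ ℱ₁ = C1 f M T m₁ t ∧ ℱ₂ = C2 f M T m₂) ∨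
      (∃ S ∈ polar f (t + 1), ℱ₁ = C3 f S m₁ ∧ ℱ₂ = C4 f S m₂ t) ∨
      (∀ M ∈ polar f (m₂ + 1), ∀ T : Submodule K (Fin (2 * ν) → K),
        T ≤ M → finrank K T = t →
        ℱ₁.ncard * ℱ₂.ncard < (C1 f M T m₁ t).ncard * (C2 f M T m₂).ncard) := by
  classical
  have hfin : Finite (Submodule K (Fin (2 * ν) → K)) := Aux.finS
  have hV : finrank K (Fin (2 * ν) → K) = 2 * ν := by simp
  have hq2 : 2 ≤ Fintype.card K := Aux.two_le
  -- maximality gives membership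
  have hmem1 : ∀ F ∈ polar f m₁, (∀ F₂ ∈ ℱ₂, t ≤ finrank K ↥(F ⊓ F₂)) → F ∈ ℱ₁ := by
    intro F hF hc
    have := (hmax (insert F ℱ₁) ℱ₂ (Set.insert_subset hF h1) h2 (by
      rintro G (rfl | hG) G₂ hG₂
      · exact hc G₂ hG₂
      · exact hcross G hG G₂ hG₂) (Set.subset_insert _ _) subset_rfl).1
    rw [← this]; exact Set.mem_insert _ _
  have hmem2 : ∀ F ∈ polar f m₂, (∀ F₁ ∈ ℱ₁, t ≤ finrank K ↥(F₁ ⊓ F)) → F ∈ ℱ₂ := by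
    intro F hF hc
    have := (hmax ℱ₁ (insert F ℱ₂) h1 (Set.insert_subset hF h2) (by
      rintro G hG G₂ (rfl | hG₂)
      · exact hc G hG
      · exact hcross G hG G₂ hG₂) subset_rfl (Set.subset_insert _ _)).2
    rw [← this]; exact Set.mem_insert _ _
  -- the covers
  obtain ⟨T, ⟨hTiso, hTc⟩, hTd⟩ : ∃ X, IsTCover f t ℱ₁ X ∧ finrank K ↥X = t := by
    have hne : {x | ∃ X, IsTCover f t ℱ₁ X ∧ finrank K ↥X = x}.Nonempty :=
      Nat.nonempty_of_pos_sInf (by unfold tauCover at htau₁; omega)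
    have := Nat.sInf_mem hne
    unfold tauCover at htau₁
    rw [htau₁] at this
    exact this
  obtain ⟨S, ⟨hSiso, hSc⟩, hSd⟩ : ∃ X, IsTCover f t ℱ₂ X ∧ finrank K ↥X = t + 1 := by
    have hne : {x | ∃ X, IsTCover f t ℱ₂ X ∧ finrank K ↥X = x}.Nonempty :=
      Nat.nonempty_of_pos_sInf (by unfold tauCover at htau₂; omega)
    have := Nat.sInf_mem hne
    unfold tauCover at htau₂
    rw [htau₂] at this
    exact this
  have hT : ∀ F ∈ ℱ₁, T ≤ F := by
    intro F hF
    have : T ⊓ F = T := Submodule.eq_of_le_of_finrank_le inf_le_left (by rw [hTd]; exact hTc F hF)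
    exact inf_eq_left.1 this
  obtain ⟨F₀, hF₀, hF₀T⟩ : ∃ F ∈ ℱ₂, ¬ T ≤ F := by
    by_contra hcon
    push Not at hcon
    exact hnt ⟨T, ⟨hTiso, hTd⟩, hT, hcon⟩
  have hmemT : ∀ F ∈ polar f m₂, T ≤ F → F ∈ ℱ₂ := by
    intro F hF hTF
    refine hmem2 F hF fun F₁ hF₁ => ?_
    rw [← hTd]
    exact Submodule.finrank_mono (le_inf (hT F₁ hF₁) hTF)
  have hTS : T ≤ S := by
    obtain ⟨F, hF, hTF, hFS⟩ := Aux.exists_avoid halt hnd hV T S hTiso (m₂ - t) (by omega)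
    rw [hTd, show t + (m₂ - t) = m₂ by omega] at hF
    have h3 := hSc F (hmemT F hF hTF)
    rw [inf_comm] at h3
    have : F ⊓ S = T := Submodule.eq_of_le_of_finrank_le hFS (by omega)
    exact this ▸ inf_le_right
  have hX : ∀ F₂ ∈ ℱ₂, t ≤ finrank K ↥(T ⊓ F₂) + 1 := by
    intro F₂ hF₂
    have h3 := hSc F₂ hF₂
    have h4 := Submodule.finrank_sup_add_finrank_inf_eq T (S ⊓ F₂)
    have h5 := Submodule.finrank_mono (sup_le hTS (inf_le_left : S ⊓ F₂ ≤ S))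
    rw [← inf_assoc, inf_eq_left.2 hTS] at h4
    omega
  have hX' : ∀ F₂ ∈ ℱ₂, ¬ T ≤ F₂ → finrank K ↥(T ⊓ F₂) + 1 = t := by
    intro F₂ hF₂ hn
    have h3 := hX F₂ hF₂
    have h4 : finrank K ↥(T ⊓ F₂) < finrank K T :=
      Submodule.finrank_lt_finrank_of_lt (inf_lt_left.2 hn)
    omega
  obtain ⟨a, ha⟩ : ∃ a, a + t = m₂ + 1 := ⟨m₂ + 1 - t, by omega⟩
  have hWd : ∀ F₂ ∈ ℱ₂, ¬ T ≤ F₂ → finrank K ↥(T ⊔ F₂) = t + a := by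
    intro F₂ hF₂ hn
    have h3 := hX' F₂ hF₂ hn
    have h4 := Submodule.finrank_sup_add_finrank_inf_eq T F₂
    have h5 := (h2 hF₂).2
    omega
  set M : Submodule K (Fin (2 * ν) → K) :=
    sSup {H | T ≤ H ∧ finrank K H = t + 1 ∧ IsTCover f t ℱ₂ H} with hMdef
  have hcov : ∀ H, T ≤ H → finrank K H = t + 1 → IsTCover f t ℱ₂ H → H ≤ M :=
    fun H h3 h4 h5 => le_sSup ⟨h3, h4, h5⟩
  have hSM : S ≤ M := hcov S hTS hSd ⟨hSiso, hSc⟩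
  have hTM : T ≤ M := hTS.trans hSM
  have hMW : ∀ F₂ ∈ ℱ₂, ¬ T ≤ F₂ → M ≤ T ⊔ F₂ := by
    intro F₂ hF₂ hn
    apply sSup_le
    rintro H ⟨h3, h4, h5, h6⟩
    have h7 := h6 F₂ hF₂
    have h8 := hX' F₂ hF₂ hn
    have h9 := Submodule.finrank_sup_add_finrank_inf_eq T (H ⊓ F₂)
    rw [← inf_assoc, inf_eq_left.2 h3] at h9
    have : T ⊔ H ⊓ F₂ = H :=
      Submodule.eq_of_le_of_finrank_le (sup_le h3 inf_le_left) (by omega)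
    rw [← this]
    exact sup_le_sup_left inf_le_right _
  have hMeq : ∀ F₂ ∈ ℱ₂, ¬ T ≤ F₂ → T ⊔ (F₂ ⊓ M) = M := by
    intro F₂ hF₂ hn
    rw [← sup_inf_assoc_of_le F₂ hTM]
    exact inf_eq_right.2 (hMW F₂ hF₂ hn)
  have hMiso : TotallyIsotropic f M := by
    rw [← hMeq F₀ hF₀ hF₀T]
    refine Aux.iso_sup halt hTiso (Aux.iso_mono inf_le_left (h2 hF₀).1) (inf_le_right.trans ?_)
    apply sSup_le
    rintro H ⟨h3, h4, h5, h6⟩ x hx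
    rw [Aux.mem_perp]
    intro n hn
    exact h5 n (h3 hn) x hx
  obtain ⟨k, hMd⟩ : ∃ k, finrank K M = t + k :=
    ⟨finrank K M - t, by have := Submodule.finrank_mono hTM; omega⟩
  have hk1 : 1 ≤ k := by have := Submodule.finrank_mono hSM; omega
  have hka : k ≤ a := by
    have := Submodule.finrank_mono (hMW F₀ hF₀ hF₀T)
    have := hWd F₀ hF₀ hF₀T
    omega
  have hMF : ∀ F₂ ∈ ℱ₂, ¬ T ≤ F₂ → finrank K ↥(M ⊓ F₂) + 1 = t + k := by
    intro F₂ hF₂ hn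
    have h3 := Submodule.finrank_sup_add_finrank_inf_eq T (F₂ ⊓ M)
    rw [hMeq F₂ hF₂ hn, inf_comm F₂ M, ← inf_assoc, inf_eq_left.2 hTM] at h3
    have := hX' F₂ hF₂ hn
    omega
  rcases hka.eq_or_lt with hka' | hka'
  · -- case (1)
    left
    have hMp : M ∈ polar f (m₂ + 1) := ⟨hMiso, by omega⟩
    refine ⟨M, hMp, T, hTM, hTd, ?_⟩
    have hF2M : ∀ F₂ ∈ ℱ₂, ¬ T ≤ F₂ → F₂ ≤ M := by
      intro F₂ hF₂ hn
      have h3 : M ⊓ F₂ = F₂ := by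
        apply Submodule.eq_of_le_of_finrank_le inf_le_right
        have := hMF F₂ hF₂ hn
        have := (h2 hF₂).2
        omega
      exact h3 ▸ inf_le_left
    have hr := hmax (C1 f M T m₁ t) (C2 f M T m₂) (fun F hF => hF.1)
      (by rintro F (hF | hF)
          · exact hF.1
          · exact hF.1) (by
        rintro G₁ ⟨hG₁, hTG, hd⟩ G₂ (⟨hG₂, hTG₂⟩ | ⟨hG₂, hGM⟩)
        · rw [← hTd]; exact Submodule.finrank_mono (le_inf hTG hTG₂)
        · have h3 := Submodule.finrank_sup_add_finrank_inf_eq (G₁ ⊓ M) G₂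
          have h4 := Submodule.finrank_mono (sup_le (inf_le_right : G₁ ⊓ M ≤ M) hGM)
          have h5 := Submodule.finrank_mono (inf_le_inf_right G₂ (inf_le_left : G₁ ⊓ M ≤ G₁))
          have h6 := hG₂.2
          omega) (by
        intro F hF
        refine ⟨h1 hF, hT F hF, ?_⟩
        obtain ⟨H, hH, hHF⟩ := Aux.step (hT F hF) (by rw [hTd]; exact hcross F hF F₀ hF₀) hF₀T
        have h3 : H ≤ M := hH.2.1.trans (sup_le hTM (hF2M F₀ hF₀ hF₀T))
        have h4 := Submodule.finrank_mono (le_inf hHF h3)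
        have h5 := hH.2.2
        omega) (by
        intro F hF
        by_cases h : T ≤ F
        · exact Or.inl ⟨h2 hF, h⟩
        · exact Or.inr ⟨h2 hF, hF2M F hF h⟩)
    exact ⟨hr.1.symm, hr.2.symm⟩
  right
  by_cases hC : k = 1 ∧ ∀ F ∈ ℱ₁, M ≤ F
  · left
    obtain ⟨rfl, hC⟩ := hC
    refine ⟨M, ⟨hMiso, hMd⟩, ?_⟩
    have hSM' : S = M := Submodule.eq_of_le_of_finrank_le hSM (by omega)
    have hr := hmax (C3 f M m₁) (C4 f M m₂ t) (fun F hF => hF.1) (fun F hF => hF.1) (by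
      rintro G₁ ⟨hG₁, hM⟩ G₂ ⟨hG₂, hd⟩
      refine hd.trans (Submodule.finrank_mono ?_)
      exact le_inf (inf_le_right.trans hM) inf_le_left)
      (fun F hF => ⟨h1 hF, hC F hF⟩)
      (fun F hF => ⟨h2 hF, by rw [inf_comm, ← hSM']; exact hSc F hF⟩)
    exact ⟨hr.1.symm, hr.2.symm⟩
  right
  intro M' hM' T' hT'M' hT'd
  obtain ⟨b, rfl⟩ : ∃ b, a = b + 1 := ⟨a - 1, by omega⟩
  have hb1 : 1 ≤ b := by omega
  set Q := Fintype.card K with hQdef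
  have hQr : (2 : ℝ) ≤ Q := by exact_mod_cast hq2
  have hF1 := Aux.F1_bound halt hnd hV hm₁ν.le T M F₀ h1 hTd hcross hT hWd hX hF₀ hF₀T hTM hMd hcov
  have hL1 := Aux.C1_lower halt hnd hV (a := b + 1) hm₁ν.le hm₁ M' T' hM'.1 hT'M' hT'd
    (by rw [hM'.2]; omega)
  have hT'iso := Aux.iso_mono hT'M' hM'.1
  have hL2 : Aux.NN Q ν m₂ t ≤ ((C2 f M' T' m₂).ncard : ℝ) := by
    have h3 := Aux.card_C3 halt hnd hV hm₂ν.le (m₂ - t) T' hT'iso (by omega)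
    rw [hT'd] at h3
    rw [← h3]
    exact_mod_cast Set.ncard_le_ncard (fun F hF => Or.inl hF) (Set.toFinite _)
  have hQ1 : (1 : ℝ) ≤ Q := by linarith
  have hn1 := Aux.NN_nonneg (q := Q) (ν := ν) (m := m₂) hq2 hm₂ν.le
  have hr1 := Aux.NN_ratio (q := Q) (ν := ν) (m := m₂) (a := t) (e := m₁ + (b + 1) + 2) hq2 hm₂ν.le
    (by omega)
  obtain ⟨y, hy1, hy2⟩ : ∃ y : ℝ, (ℱ₂.ncard : ℝ) ≤ Aux.NN Q ν m₂ t + y ∧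
      (Q : ℝ) ^ (b + 1) * y ≤ Aux.NN Q ν m₂ t := by
    by_cases hk : k = 1
    · subst hk
      have : ∃ F ∈ ℱ₁, ¬ M ≤ F := by
        by_contra hcon
        push Not at hcon
        exact hC ⟨rfl, hcon⟩
      obtain ⟨F₁, hF₁, hMF₁⟩ := this
      have hinf : F₁ ⊓ M = T := by
        symm
        apply Submodule.eq_of_le_of_finrank_le (le_inf (hT F₁ hF₁) hTM)
        have : finrank K ↥(F₁ ⊓ M) < finrank K M :=
          Submodule.finrank_lt_finrank_of_lt (inf_lt_right.2 hMF₁)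
        omega
      obtain ⟨e, he⟩ : ∃ e, m₁ = t + e := ⟨m₁ - t, by omega⟩
      refine ⟨_, Aux.F2_bound_B halt hnd hV (e := e) hm₂ν.le T M F₁ h2 hTd hMd
        (fun F hF hn => by have := hMF F hF hn; omega) hinf (by rw [(h1 hF₁).2, he])
        (fun F hF => hcross F₁ hF₁ F hF), ?_⟩
      refine le_trans ?_ hr1
      have hg : (Aux.gs Q (e + 1) : ℝ) ≤ (Q : ℝ) ^ (e + 1) := by
        exact_mod_cast (Aux.gs_lt Q (e + 1) hq2).le
      have := hn1 (t + 1)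
      calc (Q : ℝ) ^ (b + 1) * ((Q : ℝ) ^ (t + 1) * (Aux.gs Q (e + 1) * Aux.NN Q ν m₂ (t + 1)))
          ≤ (Q : ℝ) ^ (b + 1) * ((Q : ℝ) ^ (t + 1) * ((Q : ℝ) ^ (e + 1) * Aux.NN Q ν m₂ (t + 1))) := by
            gcongr
        _ = (Q : ℝ) ^ (m₁ + (b + 1) + 2) * Aux.NN Q ν m₂ (t + 1) := by
            rw [he]; ring
    · obtain ⟨j, rfl⟩ : ∃ j, k = j + 2 := ⟨k - 2, by omega⟩
      refine ⟨_, Aux.F2_bound_A halt hnd hV (l := t + 1 + j) hm₂ν.le T M h2 hTd (by omega)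
        (fun F hF hn => by have := hMF F hF hn; omega), ?_⟩
      refine le_trans ?_ hr1
      have hch := Aux.NN_chain (q := Q) (ν := ν) (m := m₂) (a := t + 1) hq2 hm₂ν.le j (by omega) hm₂ν
      have := hn1 (t + 1 + j)
      calc (Q : ℝ) ^ (b + 1) * ((Q : ℝ) ^ (t + 1 + j + 1) * Aux.NN Q ν m₂ (t + 1 + j))
          = (Q : ℝ) ^ (t + (b + 1) + 2) * ((Q : ℝ) ^ j * Aux.NN Q ν m₂ (t + 1 + j)) := by ring
        _ ≤ (Q : ℝ) ^ (m₁ + (b + 1) + 2) * ((Q : ℝ) ^ j * Aux.NN Q ν m₂ (t + 1 + j)) := by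
            gcongr
            omega
        _ ≤ _ := by gcongr
  have hr2 := Aux.NN_ratio (q := Q) (ν := ν) (m := m₁) (a := t + 1) (e := 2 * (b + 1) + t) hq2 hm₁ν.le
    (by omega)
  have hP2 := Aux.NN_nonneg (q := Q) (ν := ν) (m := m₁) hq2 hm₁ν.le (t + 2)
  have hfinal := Aux.numeric (s := Aux.gs Q b) (u := (Q : ℝ) ^ b) (g := Aux.gs Q (b + 1))
    (gk := Aux.gs Q k) (w := (Q : ℝ) ^ (b + 1))
    (Aux.NN_pos hq2 hm₁ hm₁ν.le) (Aux.NN_pos hq2 (by omega : t ≤ m₂) hm₂ν.le) hP2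
    (by
      calc (2 : ℝ) ≤ (Q : ℝ) ^ 1 := by simpa using hQr
        _ ≤ _ := pow_le_pow_right₀ hQ1 hb1)
    (by positivity) (by exact_mod_cast Aux.gs_lt Q b hq2)
    (by rw [pow_succ, mul_comm]; gcongr)
    (by rw [Aux.gs_succ]; push_cast; rfl)
    (by exact_mod_cast (Aux.gs_lt Q (b + 1) hq2).le)
    (by
      have : Aux.gs Q k ≤ Aux.gs Q b := by
        unfold Aux.gs
        apply Finset.sum_le_sum_of_subset
        intro i hi
        simp only [Finset.mem_range] at hi ⊢
        omega
      exact_mod_cast this)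
    (by
      refine le_trans ?_ hr2
      have h3 : (2 : ℝ) ≤ (Q : ℝ) ^ t := by
        calc (2 : ℝ) ≤ (Q : ℝ) ^ 1 := by simpa using hQr
          _ ≤ _ := pow_le_pow_right₀ hQ1 ht
      have h4 : 2 * ((Q : ℝ) ^ (b + 1)) ^ 2 ≤ (Q : ℝ) ^ (2 * (b + 1) + t) := by
        rw [pow_add _ (2 * (b + 1)) t, ← pow_mul, mul_comm (b + 1) 2, mul_comm]
        gcongr
      exact mul_le_mul_of_nonneg_right h4 hP2)
    hF1 hy1 (by positivity) hy2 hL1 hL2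
  exact_mod_cast hfinal

end
end
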